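/- arXiv:1101.4374 — 6 statements merged into one kernel-verified Lean document; each statement's English description precedes it below -/
import Mathlib

section
/- Let H be a finite strongly connected directed graph with m+1 vertices (m ≥ 1), let w be a vertex of H, and let k be the number of out-neighbours of w distinct from w, i.e. k = |{v ∈ V(H) : v ≠ w, (w,v) ∈ E(H)}|. Then every vertex of H can be reached from w by a directed path of length at most m − k + 1; equivalently, in the breadth-first tree T_{{w}} rooted at w (whose second level consists of the followers of w and in which a branch stops as soon as it returns to w), every vertex of H appears at some level at most m − k + 2. -/
/-!
The graph distance `d` from `w` takes every value between `0` and `d v`: a predecessor of `v` on a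
shortest walk has distance exactly `d v - 1`. The vertex `w` and its `k` out-neighbours have
distance at most `1`, so the values `2, …, d v` are attained on the remaining `m - k` vertices.
Hence `d v - 1 ≤ m - k`.
-/

/-- There is a directed walk of length `n` from `w` to `v`, given by its sequence of vertices. -/
def HasWalk {V : Type*} (E : V → V → Prop) (w : V) (n : ℕ) (v : V) : Prop :=
  ∃ γ : Fin (n + 1) → V,
    (∀ i : Fin n, E (γ i.castSucc) (γ i.succ)) ∧ γ 0 = w ∧ γ (Fin.last n) = v

lemma HasWalk.zero {V : Type*} (E : V → V → Prop) (w : V) : HasWalk E w 0 w :=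
  ⟨fun _ => w, fun i => i.elim0, rfl, rfl⟩

lemma HasWalk.snoc {V : Type*} {E : V → V → Prop} {w u v : V} {n : ℕ}
    (h : HasWalk E w n u) (huv : E u v) : HasWalk E w (n + 1) v := by
  obtain ⟨γ, hγ, h0, hl⟩ := h
  refine ⟨Fin.snoc (α := fun _ => V) γ v, fun i => ?_, ?_, Fin.snoc_last (α := fun _ => V) v γ⟩
  · induction i using Fin.lastCases with
    | last =>
      rw [Fin.succ_last, Fin.snoc_last, Fin.snoc_castSucc, hl]
      exact huv
    | cast i =>
      rw [Fin.succ_castSucc, Fin.snoc_castSucc, Fin.snoc_castSucc]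
      exact hγ i
  · rw [← Fin.castSucc_zero, Fin.snoc_castSucc, h0]

lemma HasWalk.exists_pred {V : Type*} {E : V → V → Prop} {w v : V} {n : ℕ}
    (h : HasWalk E w (n + 1) v) : ∃ u, HasWalk E w n u ∧ E u v := by
  obtain ⟨γ, hγ, h0, hl⟩ := h
  refine ⟨γ (Fin.last n).castSucc, ⟨fun i => γ i.castSucc, fun i => ?_, h0, rfl⟩, ?_⟩
  · exact hγ i.castSucc
  · rw [← hl]
    exact hγ (Fin.last n)

lemma HasWalk.exists_of_reflTransGen {V : Type*} {E : V → V → Prop} {w v : V}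
    (h : Relation.ReflTransGen E w v) : ∃ n, HasWalk E w n v := by
  induction h with
  | refl => exact ⟨0, .zero E w⟩
  | tail _ huv ih => exact ih.imp' _ fun _ hn => hn.snoc huv


/-- Let `H` be a finite strongly connected directed graph with `m + 1`
vertices (`m ≥ 1`), `w` a vertex, and `k` the number of out-neighbours of `w` distinct
from `w`.  Then every vertex of `H` can be reached from `w` by a directed path of length
at most `m - k + 1`. -/
theorem stmt0 {V : Type*} [Fintype V] (E : V → V → Prop) (m : ℕ) (hm : 1 ≤ m)
    (hcard : Fintype.card V = m + 1)
    (hconn : ∀ u v : V, Relation.ReflTransGen E u v)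
    (w : V) (k : ℕ) (hk : k = Nat.card {v : V // v ≠ w ∧ E w v}) :
    ∀ v : V, ∃ n : ℕ, n ≤ m - k + 1 ∧ ∃ γ : Fin (n + 1) → V,
      (∀ i : Fin n, E (γ i.castSucc) (γ i.succ)) ∧ γ 0 = w ∧ γ (Fin.last n) = v := by
  classical
  intro v
  have hex (x : V) : ∃ n, HasWalk E w n x := HasWalk.exists_of_reflTransGen (hconn w x)
  let d : V → ℕ := fun x => Nat.find (hex x)
  have hd (x : V) : HasWalk E w (d x) x := Nat.find_spec (hex x)
  have hle {x : V} {n : ℕ} (h : HasWalk E w n x) : d x ≤ n := Nat.find_min' (hex x) h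
  have hpred (n : ℕ) (x : V) (hx : d x = n + 1) : ∃ u, d u = n := by
    obtain ⟨u, hu, hux⟩ := HasWalk.exists_pred (hx ▸ hd x)
    have h1 := hle hu
    have h2 := hle ((hd u).snoc hux)
    exact ⟨u, by omega⟩
  have hall (j : ℕ) (hj : j ≤ d v) : ∃ u, d u = j := by
    induction hj using Nat.decreasingInduction with
    | of_succ j _ ih =>
      obtain ⟨x, hx⟩ := ih
      exact hpred j x hx
    | self => exact ⟨v, rfl⟩
  let N : Finset V := {x | x ≠ w ∧ E w x}
  have hN : N.card = k := by
    rw [hk, Nat.card_eq_fintype_card, Fintype.card_subtype]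
  have hwN : w ∉ N := by simp [N]
  have hS (x : V) (hx : x ∈ insert w N) : d x ≤ 1 := by
    rcases Finset.mem_insert.1 hx with rfl | hx
    · exact (hle (.zero E x)).trans zero_le_one
    · exact hle ((HasWalk.zero E w).snoc (Finset.mem_filter.1 hx).2.2)
  have hsub : Finset.Icc 2 (d v) ⊆ (insert w N)ᶜ.image d := by
    intro j hj
    rw [Finset.mem_Icc] at hj
    obtain ⟨u, hu⟩ := hall j hj.2
    refine Finset.mem_image.2 ⟨u, Finset.mem_compl.2 fun h => ?_, hu⟩
    have := hS u h
    omega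
  have hc := (Finset.card_le_card hsub).trans Finset.card_image_le
  rw [Nat.card_Icc, Finset.card_compl, Finset.card_insert_of_notMem hwN, hN, hcard] at hc
  exact ⟨d v, by omega, hd v⟩
end

section
/- Assume r(F_{f,V}) > 0 and x̃₀ < r(F_{f,V}). Then lim_{x → x̃₀⁻} A_i(x) = ∞ for every 1 ≤ i ≤ m, and lim_{x → x̃₀⁻} φ_{G,f,w}(x) = ∞. -/
/-! The proof evaluates the series at `x̃₀` itself. Each generating function is a sum of
nonnegative continuous terms, hence lower semicontinuous in `x` on `(0,∞)`, so it suffices to show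
that its value at `x̃₀` is `∞` (`tendsto_top_of_tsum_eq_top`).

Continuity of `det M` on `[0, y]` for a suitable `x̃₀ < y < r(F)`, together with `M(0) = -I`, gives
`x̃₀ > 0` and `det M(x̃₀) = 0` (`xtilde_spec`). Hence there is `z ≠ 0` with
`z_i = α_i ∑_j [(V_i,V_j) ∈ E(H)] z_j`.

Let `g(v)` be the sum over paths from `v` to `w` that avoid `w` in between (`totalSum`); it satisfies
`g(v) = x^{f(v)} ([v → w] + ∑_{u ≠ w, v → u} g(u))` and `g(w) = φ(x)`. If `φ(x̃₀)` were finite, this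
recursion would propagate finiteness along edges, so every class sum `β_i = ∑_{v ∈ V_i} g(v)` would
be finite; it is positive because `w` is reachable from everywhere. Moreover
`β_i = α_i ([(V_i, w) ∈ E(H)] + ∑_j [(V_i,V_j) ∈ E(H)] β_j)`. Comparing `|z|` with `β` at the indices
maximising `|z_i| / β_i`, the set of maximisers is closed under successors in `H` and never has `w`
as a successor, contradicting strong connectedness (`maximisers_closed`). So `φ(x̃₀) = ∞`.

Finally, the sum `h(v)` over all paths from `v` to `w` satisfies `h(w) ≥ φ = ∞`, and
`h(u) = ∞` forces `h(v) = ∞` whenever `v → u`; hence `h ≡ ∞` and `A_i(x̃₀) = ∞`. -/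

open Classical Filter Topology Finset
open scoped ENNReal

universe u

variable {V : Type u}

/-- A walk with `n` edges in the graph with edge relation `E`. -/
def IsWalk (E : V → V → Prop) (n : ℕ) (γ : Fin (n + 1) → V) : Prop :=
  ∀ k : Fin n, E (γ k.castSucc) (γ k.succ)

/-- `f*(γ)` for a path of length `n + 1`, encoded by its `n + 2` vertices:
the sum of `f` over all vertices of the path except the last one. -/
def fStar (f : V → ℝ) (n : ℕ) (γ : Fin (n + 2) → V) : ℝ :=
  ∑ i : Fin (n + 1), f (γ i.castSucc)

/-- The set of simple `w`-cycles: paths `γ = (v_0, …, v_{n+1})` of length `n + 1 ≥ 1`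
with `v_0 = v_{n+1} = w` and `v_i ≠ w` for `0 < i < n + 1`. -/
def SimpleCycle (E : V → V → Prop) (w : V) : Set (Σ n : ℕ, Fin (n + 2) → V) :=
  {p | IsWalk E (p.1 + 1) p.2 ∧ p.2 0 = w ∧ p.2 (Fin.last (p.1 + 1)) = w ∧
    ∀ i : Fin (p.1 + 2), i ≠ 0 → i ≠ Fin.last (p.1 + 1) → p.2 i ≠ w}

/-- Paths of length `≥ 1` starting in the set `S` and ending at `w`. -/
def PathsTo (E : V → V → Prop) (S : Set V) (w : V) : Set (Σ n : ℕ, Fin (n + 2) → V) :=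
  {p | IsWalk E (p.1 + 1) p.2 ∧ p.2 0 ∈ S ∧ p.2 (Fin.last (p.1 + 1)) = w}

/-- The generating function `φ_{G,f,w}(x) = ∑_{γ ∈ C(G;w)} x^{f*(γ)}`, valued in `[0,∞]`. -/
noncomputable def phi (E : V → V → Prop) (f : V → ℝ) (w : V) (x : ℝ) : ℝ≥0∞ :=
  ∑' γ : SimpleCycle E w, ENNReal.ofReal (x ^ fStar f γ.1.1 γ.1.2)

/-- The real-valued generating function `φ_{G,f,w}(x)`. -/
noncomputable def phiR (E : V → V → Prop) (f : V → ℝ) (w : V) (x : ℝ) : ℝ :=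
  ∑' γ : SimpleCycle E w, x ^ fStar f γ.1.1 γ.1.2

/-- Summability of the family `(x^{f*(γ)})_{γ ∈ C(G;w)}`. -/
def phiSummable (E : V → V → Prop) (f : V → ℝ) (w : V) (x : ℝ) : Prop :=
  Summable fun γ : SimpleCycle E w => x ^ fStar f γ.1.1 γ.1.2

/-- The radius of convergence `r(φ_{G,f,w})`. -/
noncomputable def rPhi (E : V → V → Prop) (f : V → ℝ) (w : V) : ℝ :=
  sSup {x : ℝ | 0 ≤ x ∧ phiSummable E f w x}

/-- `A_S(x) = ∑_γ x^{f*(γ)}` over paths from `S` to `w`, valued in `[0,∞]`. -/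
noncomputable def Afun (E : V → V → Prop) (f : V → ℝ) (S : Set V) (w : V) (x : ℝ) : ℝ≥0∞ :=
  ∑' γ : PathsTo E S w, ENNReal.ofReal (x ^ fStar f γ.1.1 γ.1.2)

/-- Summability of the family `(x^{f*(γ)})_γ` over paths from `S` to `w`. -/
def ASummable (E : V → V → Prop) (f : V → ℝ) (S : Set V) (w : V) (x : ℝ) : Prop :=
  Summable fun γ : PathsTo E S w => x ^ fStar f γ.1.1 γ.1.2

/-- The radius of convergence `r(A_S)`. -/
noncomputable def rA (E : V → V → Prop) (f : V → ℝ) (S : Set V) (w : V) : ℝ :=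
  sSup {x : ℝ | 0 ≤ x ∧ ASummable E f S w x}

/-- `α_S(x) = ∑_{v ∈ S} x^{f(v)}`, valued in `[0,∞]`. -/
noncomputable def alphaE (f : V → ℝ) (S : Set V) (x : ℝ) : ℝ≥0∞ :=
  ∑' v : S, ENNReal.ofReal (x ^ f v)

/-- `α_S(x) = ∑_{v ∈ S} x^{f(v)}`, as a real number (when summable). -/
noncomputable def alphaR (f : V → ℝ) (S : Set V) (x : ℝ) : ℝ :=
  ∑' v : S, x ^ f v.1

/-- Summability of the family `(x^{f(v)})_{v ∈ V}`. -/
def FSummable (f : V → ℝ) (x : ℝ) : Prop := Summable fun v : V => x ^ f v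

/-- The radius of convergence `r(F_{f,V})`. -/
noncomputable def rF (f : V → ℝ) : ℝ := sSup {x : ℝ | 0 ≤ x ∧ FSummable f x}

/-- The matrix `M(x)` with entries `α_{ij}(x) - δ_{ij}`, `1 ≤ i, j ≤ m`. -/
noncomputable def Mmat (f : V → ℝ) {m : ℕ} (P : Fin (m + 1) → Set V)
    (EH : Fin (m + 1) → Fin (m + 1) → Prop) (x : ℝ) : Matrix (Fin m) (Fin m) ℝ :=
  fun i j =>
    (if EH i.succ j.succ then alphaR f (P i.succ) x else 0) - if i = j then 1 else 0

/-- `x̃₀`, as in the paper: `r(F_{f,V})` if `M(x)` is invertible for all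
`0 ≤ x < r(F_{f,V})`, and `inf {x ∈ [0, r(F_{f,V})) : det M(x) = 0}` otherwise. -/
noncomputable def xtilde (f : V → ℝ) {m : ℕ} (P : Fin (m + 1) → Set V)
    (EH : Fin (m + 1) → Fin (m + 1) → Prop) : ℝ :=
  if ∀ x : ℝ, 0 ≤ x → x < rF f → (Mmat f P EH x).det ≠ 0 then rF f
  else sInf {x : ℝ | 0 ≤ x ∧ x < rF f ∧ (Mmat f P EH x).det = 0}

/-- Embedding of the indices `{1, …, ℓ}` into `{0, 1, …, m}`. -/
def embl {m : ℕ} (ℓ : ℕ) (hl : ℓ ≤ m) (i : Fin ℓ) : Fin (m + 1) :=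
  ⟨i.1 + 1, by have := i.isLt; omega⟩

/-- The `ℓ × ℓ` matrix `C(x)` with entries `α_{ij}(x) - δ_{ij}`, `1 ≤ i, j ≤ ℓ`. -/
noncomputable def Cmat (f : V → ℝ) {m : ℕ} (ℓ : ℕ) (hl : ℓ ≤ m) (P : Fin (m + 1) → Set V)
    (EH : Fin (m + 1) → Fin (m + 1) → Prop) (x : ℝ) : Matrix (Fin ℓ) (Fin ℓ) ℝ :=
  fun i j =>
    (if EH (embl ℓ hl i) (embl ℓ hl j) then alphaR f (P (embl ℓ hl i)) x else 0) -
      if i = j then 1 else 0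

/-- `ζ(x) = α_{ℓ+1}(x) + … + α_{m-1}(x)`. -/
noncomputable def zeta (f : V → ℝ) {m : ℕ} (ℓ : ℕ) (P : Fin (m + 1) → Set V) (x : ℝ) : ℝ :=
  ∑ k ∈ Finset.univ.filter (fun k : Fin (m + 1) => ℓ < k.1 ∧ k.1 < m), alphaR f (P k) x

/-- `F_{f,V,V_i}(x) = ∑_{ℓ+1 ≤ k ≤ m, (V_i,V_k) ∈ E(H)} α_k(x)`. -/
noncomputable def FfVclass (f : V → ℝ) {m : ℕ} (ℓ : ℕ) (P : Fin (m + 1) → Set V)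
    (EH : Fin (m + 1) → Fin (m + 1) → Prop) (i : Fin (m + 1)) (x : ℝ) : ℝ :=
  ∑ k ∈ Finset.univ.filter (fun k : Fin (m + 1) => ℓ < k.1 ∧ EH i k), alphaR f (P k) x

/-- The vector `(-α_1(x) F_{f,V,V_1}(x), …, -α_ℓ(x) F_{f,V,V_ℓ}(x))`. -/
noncomputable def uVec (f : V → ℝ) {m : ℕ} (ℓ : ℕ) (hl : ℓ ≤ m) (P : Fin (m + 1) → Set V)
    (EH : Fin (m + 1) → Fin (m + 1) → Prop) (x : ℝ) : Fin ℓ → ℝ :=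
  fun j => -(alphaR f (P (embl ℓ hl j)) x * FfVclass f ℓ P EH (embl ℓ hl j) x)

/-- The vector `(-α_{10}(x), …, -α_{ℓ0}(x))`. -/
noncomputable def aVec (f : V → ℝ) {m : ℕ} (ℓ : ℕ) (hl : ℓ ≤ m) (P : Fin (m + 1) → Set V)
    (EH : Fin (m + 1) → Fin (m + 1) → Prop) (x : ℝ) : Fin ℓ → ℝ :=
  fun j => -(if EH (embl ℓ hl j) 0 then alphaR f (P (embl ℓ hl j)) x else 0)

/-! ### Lower semicontinuity -/

/-- A series `∑ y ^ c i` is lower semicontinuous in `y` on `(0,∞)`: divergence at `x` forces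
blow-up near `x`. -/
lemma tendsto_top_of_tsum_eq_top {ι : Type*} (c : ι → ℝ) {x : ℝ} (hx : 0 < x)
    (h : ∑' i, ENNReal.ofReal (x ^ c i) = ⊤) :
    Tendsto (fun y : ℝ => ∑' i, ENNReal.ofReal (y ^ c i)) (𝓝 x) (𝓝 ⊤) := by
  rw [ENNReal.tendsto_nhds_top_iff_nnreal]
  intro K
  have h1 : (K : ℝ≥0∞) < ∑' i, ENNReal.ofReal (x ^ c i) := by rw [h]; exact ENNReal.coe_lt_top
  rw [ENNReal.tsum_eq_iSup_sum, lt_iSup_iff] at h1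
  obtain ⟨s, hs⟩ := h1
  have hc : Tendsto (fun y : ℝ => ∑ i ∈ s, ENNReal.ofReal (y ^ c i)) (𝓝 x)
      (𝓝 (∑ i ∈ s, ENNReal.ofReal (x ^ c i))) := by
    apply tendsto_finsetSum
    intro i _
    exact ENNReal.tendsto_ofReal (Real.continuousAt_rpow_const x (c i) (Or.inl hx.ne'))
  filter_upwards [hc.eventually (lt_mem_nhds hs)] with y hy
  exact hy.trans_le (ENNReal.sum_le_tsum s)

/-! ### Path sums and their recursion -/

/-- The indicator of a proposition, as an element of `[0,∞]`. -/
noncomputable def ind (p : Prop) : ℝ≥0∞ := if p then 1 else 0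

lemma ind_true {p : Prop} (h : p) : ind p = 1 := if_pos h
lemma ind_false {p : Prop} (h : ¬ p) : ind p = 0 := if_neg h
lemma ind_le_one (p : Prop) : ind p ≤ 1 := by unfold ind; split_ifs <;> simp
lemma ind_and (p q : Prop) : ind (p ∧ q) = ind p * ind q := by
  unfold ind; by_cases p <;> by_cases q <;> simp [*]

lemma prod_ind {n : ℕ} (p : Fin n → Prop) : ∏ i, ind (p i) = ind (∀ i, p i) := by
  by_cases h : ∀ i, p i
  · rw [ind_true h]; exact Finset.prod_eq_one fun i _ => ind_true (h i)
  · rw [ind_false h]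
    push Not at h
    obtain ⟨i, hi⟩ := h
    exact Finset.prod_eq_zero (Finset.mem_univ i) (ind_false hi)

/-- The weight of a vertex sequence `γ = (v_0, …, v_{n+1})`: it is `x^{f*(γ)}` if `γ` is a path
ending at `w` whose interior vertices satisfy `Q`, and `0` otherwise. The product form makes it
multiplicative under prepending a vertex. -/
noncomputable def wt (E : V → V → Prop) (f : V → ℝ) (w : V) (Q : V → Prop) (x : ℝ) (n : ℕ)
    (γ : Fin (n + 2) → V) : ℝ≥0∞ :=
  (∏ i : Fin (n + 1), (ENNReal.ofReal (x ^ f (γ i.castSucc)) * ind (E (γ i.castSucc) (γ i.succ)))) *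
    (∏ i : Fin n, ind (Q (γ i.succ.castSucc))) * ind (γ (Fin.last (n + 1)) = w)

lemma wt_cons (E : V → V → Prop) (f : V → ℝ) (w : V) (Q : V → Prop) (x : ℝ) (n : ℕ)
    (v : V) (γ : Fin (n + 2) → V) :
    wt E f w Q x (n + 1) (Fin.cons v γ : Fin (n + 3) → V) =
      ENNReal.ofReal (x ^ f v) * ind (E v (γ 0)) * ind (Q (γ 0)) * wt E f w Q x n γ := by
  unfold wt
  rw [Fin.prod_univ_succ (n := n + 1), Fin.prod_univ_succ
    (fun i : Fin (n + 1) => ind (Q ((Fin.cons v γ : Fin (n + 3) → V) i.succ.castSucc)))]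
  have h1 : ∀ i : Fin (n + 1), (Fin.cons v γ : Fin (n + 3) → V) i.succ.castSucc = γ i.castSucc := by
    intro i
    rw [← Fin.succ_castSucc, Fin.cons_succ]
  have h2 : (Fin.cons v γ : Fin (n + 3) → V) (Fin.last (n + 1 + 1)) = γ (Fin.last (n + 1)) := by
    rw [← Fin.succ_last, Fin.cons_succ]
  simp only [h1, h2, Fin.cons_succ, Fin.castSucc_zero, Fin.cons_zero]
  ring

/-- The sum of the weights of all sequences `(v, v_1, …, v_{n+1})` starting at `v`. -/
noncomputable def pathSum (E : V → V → Prop) (f : V → ℝ) (w : V) (Q : V → Prop) (x : ℝ) (n : ℕ)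
    (v : V) : ℝ≥0∞ :=
  ∑' δ : Fin (n + 1) → V, wt E f w Q x n (Fin.cons v δ : Fin (n + 2) → V)

/-- The sum of `x^{f*(γ)}` over all paths `γ` of length at least `1` from `v` to `w` whose interior
vertices satisfy `Q`. -/
noncomputable def totalSum (E : V → V → Prop) (f : V → ℝ) (w : V) (Q : V → Prop) (x : ℝ)
    (v : V) : ℝ≥0∞ :=
  ∑' n, pathSum E f w Q x n v

lemma tsum_cons {n : ℕ} (F : (Fin (n + 1) → V) → ℝ≥0∞) :
    ∑' γ, F γ = ∑' v, ∑' δ : Fin n → V, F (Fin.cons v δ : Fin (n + 1) → V) := by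
  rw [← (Fin.consEquiv (fun _ : Fin (n + 1) => V)).tsum_eq, ENNReal.tsum_prod']
  rfl

lemma pathSum_zero (E : V → V → Prop) (f : V → ℝ) (w : V) (Q : V → Prop) (x : ℝ) (v : V) :
    pathSum E f w Q x 0 v = ENNReal.ofReal (x ^ f v) * ind (E v w) := by
  unfold pathSum
  rw [← (Equiv.funUnique (Fin 1) V).symm.tsum_eq, tsum_eq_single w]
  · simp [wt, ind]
  · intro u hu
    have : ind (u = w) = 0 := ind_false hu
    simp [wt, this]

lemma pathSum_succ (E : V → V → Prop) (f : V → ℝ) (w : V) (Q : V → Prop) (x : ℝ) (n : ℕ) (v : V) :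
    pathSum E f w Q x (n + 1) v =
      ENNReal.ofReal (x ^ f v) * ∑' u, ind (E v u) * ind (Q u) * pathSum E f w Q x n u := by
  conv_lhs => unfold pathSum
  rw [tsum_cons, ← ENNReal.tsum_mul_left]
  refine tsum_congr fun u => ?_
  unfold pathSum
  rw [← ENNReal.tsum_mul_left, ← ENNReal.tsum_mul_left]
  refine tsum_congr fun δ => ?_
  rw [wt_cons, Fin.cons_zero]
  ring

/-- First-step decomposition of paths. -/
lemma totalSum_eq (E : V → V → Prop) (f : V → ℝ) (w : V) (Q : V → Prop) (x : ℝ) (v : V) :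
    totalSum E f w Q x v =
      ENNReal.ofReal (x ^ f v) *
        (ind (E v w) + ∑' u, ind (E v u) * ind (Q u) * totalSum E f w Q x u) := by
  have h : totalSum E f w Q x v =
      pathSum E f w Q x 0 v + ∑' n, pathSum E f w Q x (n + 1) v :=
    tsum_eq_zero_add' ENNReal.summable
  rw [h, pathSum_zero, mul_add]
  congr 1
  simp_rw [pathSum_succ]
  rw [ENNReal.tsum_mul_left, ENNReal.tsum_comm]
  congr 1
  refine tsum_congr fun u => ?_
  rw [ENNReal.tsum_mul_left]
  rfl

lemma totalSum_mono (E : V → V → Prop) (f : V → ℝ) (w : V) (Q : V → Prop) (x : ℝ) (v : V) :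
    totalSum E f w Q x v ≤ totalSum E f w (fun _ => True) x v := by
  refine ENNReal.tsum_le_tsum fun n => ENNReal.tsum_le_tsum fun δ => ?_
  unfold wt
  gcongr
  rw [ind_true trivial]
  exact ind_le_one _

lemma wt_eq (E : V → V → Prop) (f : V → ℝ) (w : V) (Q : V → Prop) {x : ℝ} (hx : 0 < x) (n : ℕ)
    (γ : Fin (n + 2) → V) :
    wt E f w Q x n γ = ind (IsWalk E (n + 1) γ ∧ γ (Fin.last (n + 1)) = w ∧
      ∀ i : Fin (n + 2), i ≠ 0 → i ≠ Fin.last (n + 1) → Q (γ i)) *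
        ENNReal.ofReal (x ^ fStar f n γ) := by
  have hQ : (∀ i : Fin n, Q (γ i.succ.castSucc)) ↔
      ∀ i : Fin (n + 2), i ≠ 0 → i ≠ Fin.last (n + 1) → Q (γ i) := by
    constructor
    · intro h i h0 hl
      obtain ⟨j, rfl⟩ := Fin.exists_castSucc_eq.2 hl
      have hj : j ≠ 0 := by rintro rfl; exact h0 rfl
      obtain ⟨k, rfl⟩ := Fin.exists_succ_eq.2 hj
      exact h k
    · intro h i
      refine h _ ?_ (Fin.castSucc_lt_last _).ne
      rw [← Fin.succ_castSucc]
      exact Fin.succ_ne_zero _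
  unfold wt
  rw [Finset.prod_mul_distrib, prod_ind, prod_ind, hQ, ind_and, ind_and, fStar,
    Real.rpow_sum_of_pos hx, ENNReal.ofReal_prod_of_nonneg (fun i _ => (Real.rpow_pos_of_pos hx _).le)]
  unfold IsWalk
  ring

/-- Summing over a set of paths given by a starting set and a condition on interior vertices. -/
lemma tsum_paths (E : V → V → Prop) (f : V → ℝ) (w : V) (Q : V → Prop) {x : ℝ} (hx : 0 < x)
    (S : Set V) (T : Set (Σ n : ℕ, Fin (n + 2) → V))
    (hT : ∀ p, p ∈ T ↔ p.2 0 ∈ S ∧ IsWalk E (p.1 + 1) p.2 ∧ p.2 (Fin.last (p.1 + 1)) = w ∧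
      ∀ i : Fin (p.1 + 2), i ≠ 0 → i ≠ Fin.last (p.1 + 1) → Q (p.2 i)) :
    ∑' γ : T, ENNReal.ofReal (x ^ fStar f γ.1.1 γ.1.2) =
      ∑' v, ind (v ∈ S) * totalSum E f w Q x v := by
  rw [tsum_subtype T (fun p => ENNReal.ofReal (x ^ fStar f p.1 p.2)), ENNReal.tsum_sigma']
  have h1 : ∀ n : ℕ, ∑' γ : Fin (n + 2) → V,
      T.indicator (fun p => ENNReal.ofReal (x ^ fStar f p.1 p.2)) ⟨n, γ⟩ =
      ∑' v, ind (v ∈ S) * pathSum E f w Q x n v := by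
    intro n
    rw [tsum_cons]
    refine tsum_congr fun v => ?_
    unfold pathSum
    rw [← ENNReal.tsum_mul_left]
    refine tsum_congr fun δ => ?_
    have h2 : ∀ γ : Fin (n + 2) → V,
        T.indicator (fun p => ENNReal.ofReal (x ^ fStar f p.1 p.2)) ⟨n, γ⟩ =
        ind (γ 0 ∈ S) * wt E f w Q x n γ := by
      intro γ
      rw [wt_eq E f w Q hx, ← mul_assoc, ← ind_and]
      by_cases h : (⟨n, γ⟩ : Σ n : ℕ, Fin (n + 2) → V) ∈ T
      · rw [Set.indicator_of_mem h, ind_true ((hT _).1 h), one_mul]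
      · rw [Set.indicator_of_notMem h, ind_false (fun h' => h ((hT _).2 h')), zero_mul]
    rw [h2, Fin.cons_zero]
  simp_rw [h1]
  rw [ENNReal.tsum_comm]
  refine tsum_congr fun v => ?_
  rw [ENNReal.tsum_mul_left]
  rfl

lemma phi_eq (E : V → V → Prop) (f : V → ℝ) (w : V) {x : ℝ} (hx : 0 < x) :
    phi E f w x = totalSum E f w (fun u => u ≠ w) x w := by
  unfold phi
  rw [tsum_paths E f w (fun u => u ≠ w) hx {w} (SimpleCycle E w), tsum_eq_single w]
  · rw [ind_true (Set.mem_singleton w), one_mul]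
  · intro v hv
    rw [ind_false (by simpa using hv), zero_mul]
  · intro p
    simp only [SimpleCycle, Set.mem_ofPred_eq, Set.mem_singleton_iff]
    tauto

lemma Afun_eq (E : V → V → Prop) (f : V → ℝ) (S : Set V) (w : V) {x : ℝ} (hx : 0 < x) :
    Afun E f S w x = ∑' v, ind (v ∈ S) * totalSum E f w (fun _ => True) x v := by
  unfold Afun
  rw [tsum_paths E f w (fun _ => True) hx S (PathsTo E S w)]
  intro p
  simp only [PathsTo, Set.mem_ofPred_eq]
  tauto

/-! ### The singular matrix at `x̃₀` -/

lemma exists_FSummable {f : V → ℝ} {a : ℝ} (hrF : 0 < rF f) (h : a < rF f) :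
    ∃ y, a < y ∧ 0 ≤ y ∧ FSummable f y := by
  unfold rF at hrF h
  have hne : {x : ℝ | 0 ≤ x ∧ FSummable f x}.Nonempty := by
    by_contra hc
    rw [Set.not_nonempty_iff_eq_empty] at hc
    rw [hc, Real.sSup_empty] at hrF
    exact lt_irrefl _ hrF
  obtain ⟨y, hy, hay⟩ := exists_lt_of_lt_csSup hne h
  exact ⟨y, hay, hy.1, hy.2⟩

lemma FSummable.mono {f : V → ℝ} (hf : ∀ v, 0 < f v) {x y : ℝ} (hx : 0 ≤ x) (hxy : x ≤ y)
    (h : FSummable f y) : FSummable f x :=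
  Summable.of_nonneg_of_le (fun v => Real.rpow_nonneg hx _)
    (fun v => Real.rpow_le_rpow hx hxy (hf v).le) h

lemma continuousOn_alphaR {f : V → ℝ} (hf : ∀ v, 0 < f v) (S : Set V) {y : ℝ}
    (h : FSummable f y) : ContinuousOn (alphaR f S) (Set.Icc 0 y) := by
  unfold alphaR
  refine continuousOn_tsum (u := fun v : S => y ^ f v.1) ?_ (h.subtype S) ?_
  · intro v
    exact (Real.continuous_rpow_const (hf v.1).le).continuousOn
  · intro v x hx
    rw [Real.norm_of_nonneg (Real.rpow_nonneg hx.1 _)]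
    exact Real.rpow_le_rpow hx.1 hx.2 (hf v.1).le

lemma xtilde_spec {f : V → ℝ} (hf : ∀ v, 0 < f v) {m : ℕ} (P : Fin (m + 1) → Set V)
    (EH : Fin (m + 1) → Fin (m + 1) → Prop) (hrF : 0 < rF f) (hlt : xtilde f P EH < rF f) :
    0 < xtilde f P EH ∧ (Mmat f P EH (xtilde f P EH)).det = 0 ∧ FSummable f (xtilde f P EH) := by
  obtain ⟨y, hay, hy0, hy⟩ := exists_FSummable hrF hlt
  have hx : xtilde f P EH = sInf {x : ℝ | 0 ≤ x ∧ x < rF f ∧ (Mmat f P EH x).det = 0} := by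
    by_cases hc : ∀ x : ℝ, 0 ≤ x → x < rF f → (Mmat f P EH x).det ≠ 0
    · unfold xtilde at hlt
      rw [if_pos hc] at hlt
      exact absurd hlt (lt_irrefl _)
    · unfold xtilde
      rw [if_neg hc]
  have hne : {x : ℝ | 0 ≤ x ∧ x < rF f ∧ (Mmat f P EH x).det = 0}.Nonempty := by
    by_contra hc
    rw [Set.not_nonempty_iff_eq_empty, Set.eq_empty_iff_forall_notMem] at hc
    unfold xtilde at hlt
    rw [if_pos (fun x h0 h1 h2 => hc x ⟨h0, h1, h2⟩)] at hlt
    exact lt_irrefl _ hlt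
  have hcl := csInf_mem_closure hne ⟨0, fun _ h => h.1⟩
  rw [← hx] at hcl
  have hcont : ContinuousOn (fun x => (Mmat f P EH x).det) (Set.Icc 0 y) := by
    rw [continuousOn_iff_continuous_domRestrict]
    refine Continuous.matrix_det (A := fun x : Set.Icc 0 y => Mmat f P EH x) ?_
    refine continuous_matrix fun i j => ?_
    unfold Mmat
    refine Continuous.sub ?_ continuous_const
    split_ifs
    · exact (continuousOn_alphaR hf (P i.succ) hy).domRestrict
    · exact continuous_const
  have hclosed : IsClosed (Set.Icc 0 y ∩ (fun x => (Mmat f P EH x).det) ⁻¹' {0}) :=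
    hcont.preimage_isClosed_of_isClosed isClosed_Icc isClosed_singleton
  have hmem : xtilde f P EH ∈ Set.Icc 0 y ∩ (fun x => (Mmat f P EH x).det) ⁻¹' {0} := by
    rw [← hclosed.closure_eq]
    refine closure_mono ?_ (isOpen_Iio.closure_inter ⟨hcl, Set.mem_Iio.2 hay⟩)
    rintro x ⟨hxZ, hxy⟩
    exact ⟨⟨hxZ.1, le_of_lt hxy⟩, hxZ.2.2⟩
  refine ⟨lt_of_le_of_ne hmem.1.1 ?_, hmem.2, hy.mono hf hmem.1.1 hay.le⟩
  intro h0
  have hd : (Mmat f P EH (xtilde f P EH)).det = 0 := hmem.2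
  rw [← h0] at hd
  have hM : Mmat f P EH 0 = -1 := by
    ext i j
    have ha : alphaR f (P i.succ) 0 = 0 := by
      unfold alphaR
      simp [Real.zero_rpow (hf _).ne']
    simp [Mmat, ha, Matrix.one_apply]
  rw [hM, Matrix.det_neg, Matrix.det_one, mul_one] at hd
  exact pow_ne_zero _ (by norm_num) hd

/-! ### Comparison with a null vector -/

/-- If `β` is a supersolution of `β = b + Tβ` with `β > 0`, where `T_{ij} = a_i [R i j]` and
`b_i = a_i [r i]`, and `z` is fixed by `T`, then an index maximising `|z_i| / β_i` does not satisfy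
`r`, and all its successors are maximisers too. -/
lemma maximisers_closed {m : ℕ} (R : Fin m → Fin m → Prop) (r : Fin m → Prop) (a β z : Fin m → ℝ)
    (ha : ∀ i, 0 < a i)
    (hβ : ∀ i, a i * ((if r i then 1 else 0) + ∑ j, if R i j then β j else 0) ≤ β i)
    (hz : ∀ i, z i = a i * ∑ j, if R i j then z j else 0)
    (t : ℝ) (ht : 0 < t) (htz : ∀ i, |z i| ≤ t * β i)
    (i : Fin m) (hi : |z i| = t * β i) :
    ¬ r i ∧ ∀ j, R i j → |z j| = t * β j := by
  have h1 : |z i| ≤ a i * ∑ j, if R i j then |z j| else 0 := by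
    rw [hz i, abs_mul, abs_of_pos (ha i)]
    refine mul_le_mul_of_nonneg_left ((Finset.abs_sum_le_sum_abs _ _).trans ?_) (ha i).le
    refine Finset.sum_le_sum fun j _ => ?_
    split_ifs <;> simp
  have h2 := mul_le_mul_of_nonneg_left (hβ i) ht.le
  have h3 : a i * (t * ((if r i then 1 else 0) + ∑ j, if R i j then β j else 0)) ≤
      a i * ∑ j, if R i j then |z j| else 0 := by linarith [h1, h2, hi]
  have h4 := le_of_mul_le_mul_left h3 (ha i)
  rw [mul_add, Finset.mul_sum] at h4
  have h5 : ∀ j, (if R i j then |z j| else 0) ≤ t * (if R i j then β j else 0) := by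
    intro j
    split_ifs
    · exact htz j
    · simp
  have h6 := Finset.sum_le_sum fun j (_ : j ∈ Finset.univ) => h5 j
  constructor
  · intro hr
    rw [if_pos hr] at h4
    linarith
  · intro j hj
    refine le_antisymm (htz j) (not_lt.1 fun hlt => ?_)
    have h7 : ∑ j, (if R i j then |z j| else 0) < ∑ j, t * (if R i j then β j else 0) := by
      refine Finset.sum_lt_sum (fun j _ => h5 j) ⟨j, Finset.mem_univ _, ?_⟩
      rw [if_pos hj, if_pos hj]
      exact hlt
    have h8 : 0 ≤ t * (if r i then (1 : ℝ) else 0) := by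
      split_ifs <;> simp [ht.le]
    linarith

/-! ### Divergence at `x̃₀` -/

section Divergence

variable {E : V → V → Prop} {f : V → ℝ} {w : V} {x : ℝ}

lemma ofReal_rpow_ne_zero (hx : 0 < x) (c : ℝ) : ENNReal.ofReal (x ^ c) ≠ 0 :=
  (ENNReal.ofReal_pos.2 (Real.rpow_pos_of_pos hx c)).ne'

/-- If the path sum at `v` is finite, so is the total of the path sums over the successors of `v`
satisfying `Q`. -/
lemma tsum_succ_ne_top (hx : 0 < x) {Q : V → Prop} {v : V} (h : totalSum E f w Q x v ≠ ⊤) :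
    ∑' u, ind (E v u) * ind (Q u) * totalSum E f w Q x u ≠ ⊤ := by
  intro hc
  rw [totalSum_eq, hc, add_top, ENNReal.mul_top (ofReal_rpow_ne_zero hx _)] at h
  exact h rfl

lemma totalSum_ne_top_step (hx : 0 < x) {Q : V → Prop} {v u : V} (hvu : E v u) (hu : Q u)
    (h : totalSum E f w Q x v ≠ ⊤) : totalSum E f w Q x u ≠ ⊤ := by
  refine ne_top_of_le_ne_top (tsum_succ_ne_top hx h) ?_
  refine le_trans ?_ (ENNReal.le_tsum u)
  rw [ind_true hvu, ind_true hu, one_mul, one_mul]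

lemma totalSum_ne_top (hx : 0 < x) (hconn : ∀ u v : V, Relation.ReflTransGen E u v)
    (h : totalSum E f w (fun u => u ≠ w) x w ≠ ⊤) (v : V) :
    totalSum E f w (fun u => u ≠ w) x v ≠ ⊤ := by
  induction hconn w v with
  | refl => exact h
  | @tail b c _ hbc ih =>
    by_cases hc : c = w
    · rw [hc]; exact h
    · exact totalSum_ne_top_step hx hbc hc ih

lemma totalSum_ne_zero (hx : 0 < x) (hconn : ∀ u v : V, Relation.ReflTransGen E u v)
    {v : V} (hv : v ≠ w) : totalSum E f w (fun u => u ≠ w) x v ≠ 0 := by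
  have key : v = w ∨ totalSum E f w (fun u => u ≠ w) x v ≠ 0 := by
    induction hconn v w using Relation.ReflTransGen.head_induction_on with
    | refl => exact Or.inl rfl
    | @head a c hac _ ih =>
      right
      rw [totalSum_eq]
      refine mul_ne_zero (ofReal_rpow_ne_zero hx _) fun h0 => ?_
      rw [add_eq_zero] at h0
      by_cases hc : c = w
      · rw [← hc, ind_true hac] at h0
        exact one_ne_zero h0.1
      · have := ENNReal.tsum_eq_zero.1 h0.2 c
        rw [ind_true hac, ind_true hc, one_mul, one_mul] at this
        exact (ih hc).resolve_left hc this
  exact key.resolve_left hv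

/-- A sum over the vertices other than `w` splits into sums over the classes `V_1, …, V_m`. -/
lemma tsum_classes {m : ℕ} {P : Fin (m + 1) → Set V} (hP0 : P 0 = {w})
    (hdisj : ∀ i j, i ≠ j → Disjoint (P i) (P j)) (hcover : ∀ v, ∃ i, v ∈ P i)
    (F : V → ℝ≥0∞) :
    ∑' u, ind (u ≠ w) * F u = ∑ j : Fin m, ∑' u, ind (u ∈ P j.succ) * F u := by
  rw [← Summable.tsum_finsetSum (fun _ _ => ENNReal.summable)]
  refine tsum_congr fun u => ?_
  rw [← Finset.sum_mul]
  congr 1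
  by_cases hu : u = w
  · rw [ind_false (not_not.2 hu)]
    symm
    refine Finset.sum_eq_zero fun j _ => ind_false fun hj => ?_
    have h0 : u ∈ P 0 := by rw [hP0, hu]; rfl
    exact Set.disjoint_left.1 (hdisj 0 j.succ (Fin.succ_ne_zero j).symm) h0 hj
  · rw [ind_true hu]
    obtain ⟨i, hi⟩ := hcover u
    have hi0 : i ≠ 0 := by
      rintro rfl
      rw [hP0] at hi
      exact hu hi
    obtain ⟨j, rfl⟩ := Fin.exists_succ_eq.2 hi0
    rw [Finset.sum_eq_single j, ind_true hi]
    · intro k _ hk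
      refine ind_false fun hk' => ?_
      exact Set.disjoint_left.1 (hdisj k.succ j.succ (fun h => hk (Fin.succ_injective _ h))) hk' hi
    · simp

/-- If `M(x)` is singular, then `φ(x) = ∞`, stated through `phi_eq`. -/
lemma phi_eq_top (hx : 0 < x) {m : ℕ} {P : Fin (m + 1) → Set V}
    {EH : Fin (m + 1) → Fin (m + 1) → Prop}
    (hconn : ∀ u v : V, Relation.ReflTransGen E u v)
    (hP0 : P 0 = {w})
    (hdisj : ∀ i j, i ≠ j → Disjoint (P i) (P j))
    (hcover : ∀ v, ∃ i, v ∈ P i)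
    (hne : ∀ i, (P i).Nonempty)
    (hEH : ∀ i j, ∀ v ∈ P i, ∀ v' ∈ P j, (E v v' ↔ EH i j))
    (hdet : (Mmat f P EH x).det = 0) (hsum : FSummable f x) :
    totalSum E f w (fun u => u ≠ w) x w = ⊤ := by
  by_contra hfin
  set g := totalSum E f w (fun u => u ≠ w) x with hg
  have hgfin : ∀ v, g v ≠ ⊤ := totalSum_ne_top hx hconn hfin
  have hnew : ∀ (i : Fin m) (v : V), v ∈ P i.succ → v ≠ w := by
    rintro i v hv rfl
    have h0 : v ∈ P 0 := by rw [hP0]; rfl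
    exact Set.disjoint_left.1 (hdisj 0 i.succ (Fin.succ_ne_zero i).symm) h0 hv
  have hw0 : w ∈ P 0 := by rw [hP0]; rfl
  set B : Fin m → ℝ≥0∞ := fun i => ∑' u, ind (u ∈ P i.succ) * g u with hB
  -- Every class has a vertex with a predecessor, which is then a predecessor of the whole class.
  have hBfin : ∀ i, B i ≠ ⊤ := by
    intro i
    obtain ⟨u, hu⟩ := hne i.succ
    rcases Relation.ReflTransGen.cases_tail (hconn w u) with h | ⟨v, _, hvu⟩
    · exact absurd h (hnew i u hu)
    · refine ne_top_of_le_ne_top (tsum_succ_ne_top hx (hgfin v)) ?_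
      refine ENNReal.tsum_le_tsum fun u' => ?_
      by_cases hu' : u' ∈ P i.succ
      · obtain ⟨k, hk⟩ := hcover v
        have hvu' : E v u' := (hEH k i.succ v hk u' hu').2 ((hEH k i.succ v hk u hu).1 hvu)
        rw [ind_true hu', ind_true hvu', ind_true (hnew i u' hu'), one_mul, one_mul,
          one_mul]
      · rw [ind_false hu', zero_mul]
        exact zero_le
  have hBpos : ∀ i, B i ≠ 0 := by
    intro i h0
    obtain ⟨u, hu⟩ := hne i.succ
    have := ENNReal.tsum_eq_zero.1 h0 u
    rw [ind_true hu, one_mul] at this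
    exact totalSum_ne_zero hx hconn (hnew i u hu) this
  have halpha : ∀ i : Fin m, ENNReal.ofReal (alphaR f (P i.succ) x) =
      ∑' u, ind (u ∈ P i.succ) * ENNReal.ofReal (x ^ f u) := by
    intro i
    unfold alphaR
    rw [ENNReal.ofReal_tsum_of_nonneg (fun v => Real.rpow_nonneg hx.le _) (hsum.subtype _),
      tsum_subtype (P i.succ) (fun u => ENNReal.ofReal (x ^ f u))]
    refine tsum_congr fun u => ?_
    by_cases hu : u ∈ P i.succ
    · rw [Set.indicator_of_mem hu, ind_true hu, one_mul]
    · rw [Set.indicator_of_notMem hu, ind_false hu, zero_mul]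
  have hapos : ∀ i : Fin m, 0 < alphaR f (P i.succ) x := by
    intro i
    obtain ⟨u, hu⟩ := hne i.succ
    exact (hsum.subtype (P i.succ)).tsum_pos (fun v => Real.rpow_nonneg hx.le _) ⟨u, hu⟩
      (Real.rpow_pos_of_pos hx _)
  have hBeq : ∀ i, B i = ENNReal.ofReal (alphaR f (P i.succ) x) *
      (ind (EH i.succ 0) + ∑ j, ind (EH i.succ j.succ) * B j) := by
    intro i
    rw [halpha, ← ENNReal.tsum_mul_right]
    refine tsum_congr fun u => ?_
    by_cases hu : u ∈ P i.succ
    · rw [ind_true hu, one_mul, one_mul, hg, totalSum_eq, ← hg]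
      congr 2
      · rw [hEH i.succ 0 u hu w hw0]
      · have h1 : ∑' u', ind (E u u') * ind (u' ≠ w) * g u' =
            ∑' u', ind (u' ≠ w) * (ind (E u u') * g u') := tsum_congr fun u' => by ring
        rw [h1, tsum_classes hP0 hdisj hcover]
        refine Finset.sum_congr rfl fun j _ => ?_
        rw [hB, ← ENNReal.tsum_mul_left]
        refine tsum_congr fun u' => ?_
        by_cases hu' : u' ∈ P j.succ
        · rw [hEH i.succ j.succ u hu u' hu']
          ring
        · rw [ind_false hu']
          simp
    · rw [ind_false hu]
      simp
  set β : Fin m → ℝ := fun i => (B i).toReal with hβ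
  have hβpos : ∀ i, 0 < β i := fun i => ENNReal.toReal_pos (hBpos i) (hBfin i)
  have hind : ∀ p : Prop, (ind p).toReal = if p then 1 else 0 := by
    intro p
    unfold ind
    split_ifs <;> simp
  have hindtop : ∀ p : Prop, ind p ≠ ⊤ := fun p =>
    ne_top_of_le_ne_top ENNReal.one_ne_top (ind_le_one p)
  have hβeq : ∀ i, alphaR f (P i.succ) x * ((if EH i.succ 0 then 1 else 0) +
      ∑ j : Fin m, if EH i.succ j.succ then β j else 0) ≤ β i := by
    intro i
    refine le_of_eq ?_
    have hprod : ∀ j : Fin m, ind (EH i.succ j.succ) * B j ≠ ⊤ :=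
      fun j => ENNReal.mul_ne_top (hindtop _) (hBfin j)
    simp only [hβ]
    conv_rhs => rw [hBeq i]
    rw [ENNReal.toReal_mul, ENNReal.toReal_ofReal (hapos i).le,
      ENNReal.toReal_add (hindtop _) (ENNReal.sum_ne_top.2 fun j _ => hprod j),
      ENNReal.toReal_sum (fun j _ => hprod j), hind]
    congr 2
    refine Finset.sum_congr rfl fun j _ => ?_
    rw [ENNReal.toReal_mul, hind]
    split_ifs <;> simp
  obtain ⟨z, hz0, hz⟩ := Matrix.exists_mulVec_eq_zero_iff.2 hdet
  have hzeq : ∀ i, z i = alphaR f (P i.succ) x *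
      ∑ j : Fin m, if EH i.succ j.succ then z j else 0 := by
    intro i
    have h := congrFun hz i
    simp only [Matrix.mulVec, dotProduct, Mmat, sub_mul, Finset.sum_sub_distrib, ite_mul, one_mul,
      zero_mul, Finset.sum_ite_eq, Finset.mem_univ, if_true, Pi.zero_apply] at h
    rw [Finset.mul_sum]
    simp only [mul_ite, mul_zero]
    linarith
  obtain ⟨k, hk⟩ := Function.ne_iff.1 hz0
  obtain ⟨i₀, _, hi₀⟩ := Finset.exists_max_image Finset.univ (fun i => |z i| / β i)
    ⟨k, Finset.mem_univ k⟩
  set t := |z i₀| / β i₀ with ht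
  have htpos : 0 < t :=
    (div_pos (abs_pos.2 hk) (hβpos k)).trans_le (hi₀ k (Finset.mem_univ k))
  have htz : ∀ i, |z i| ≤ t * β i := fun i =>
    (div_le_iff₀ (hβpos i)).1 (hi₀ i (Finset.mem_univ i))
  have hmax := maximisers_closed (fun i j : Fin m => EH i.succ j.succ)
    (fun i : Fin m => EH i.succ 0)
    (fun i : Fin m => alphaR f (P i.succ) x) β z hapos hβeq hzeq t htpos htz
  -- The union of the maximising classes is closed under edges, so it would contain `w`.
  obtain ⟨v₀, hv₀⟩ := hne i₀.succ
  have hreach : ∀ v, Relation.ReflTransGen E v₀ v →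
      ∃ i : Fin m, v ∈ P i.succ ∧ |z i| = t * β i := by
    intro v hv
    induction hv with
    | refl => exact ⟨i₀, hv₀, (div_mul_cancel₀ _ (hβpos i₀).ne').symm⟩
    | @tail b c _ hbc ih =>
      obtain ⟨i, hbi, hi⟩ := ih
      obtain ⟨hr, hR⟩ := hmax i hi
      obtain ⟨j, hj⟩ := hcover c
      have hij := (hEH i.succ j b hbi c hj).1 hbc
      have hj0 : j ≠ 0 := by
        rintro rfl
        exact hr hij
      obtain ⟨j', rfl⟩ := Fin.exists_succ_eq.2 hj0
      exact ⟨j', hj, hR j' hij⟩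
  obtain ⟨i, hi, _⟩ := hreach w (hconn v₀ w)
  exact hnew i w hi rfl

lemma totalSum_true_eq_top (hx : 0 < x) (hconn : ∀ u v : V, Relation.ReflTransGen E u v)
    (h : totalSum E f w (fun u => u ≠ w) x w = ⊤) (v : V) :
    totalSum E f w (fun _ => True) x v = ⊤ := by
  induction hconn v w using Relation.ReflTransGen.head_induction_on with
  | refl => exact top_le_iff.1 (h ▸ totalSum_mono E f w _ x w)
  | @head a c hac _ ih =>
    by_contra hc
    exact totalSum_ne_top_step hx hac trivial hc ih

end Divergence

/-- If `r(F_{f,V}) > 0` and `x̃₀ < r(F_{f,V})`, then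
`A_i(x) → ∞` as `x → x̃₀⁻` for every `1 ≤ i ≤ m`, and `φ_{G,f,w}(x) → ∞` as `x → x̃₀⁻`. -/
theorem stmt5 [Countable V] (E : V → V → Prop) (f : V → ℝ) (w : V)
    (m : ℕ) (hm : 0 < m) (P : Fin (m + 1) → Set V)
    (EH : Fin (m + 1) → Fin (m + 1) → Prop)
    (hf : ∀ v, 0 < f v)
    (hconn : ∀ u v : V, Relation.ReflTransGen E u v)
    (hP0 : P 0 = {w})
    (hdisj : ∀ i j, i ≠ j → Disjoint (P i) (P j))
    (hcover : ∀ v, ∃ i, v ∈ P i)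
    (hne : ∀ i, (P i).Nonempty)
    (hEH : ∀ i j, ∀ v ∈ P i, ∀ v' ∈ P j, (E v v' ↔ EH i j))
    (hrF : 0 < rF f) (hlt : xtilde f P EH < rF f) :
    (∀ i : Fin m,
      Tendsto (fun x : ℝ => Afun E f (P i.succ) w x) (𝓝[<] xtilde f P EH)
        (𝓝 (⊤ : ℝ≥0∞))) ∧
    Tendsto (fun x : ℝ => phi E f w x) (𝓝[<] xtilde f P EH) (𝓝 (⊤ : ℝ≥0∞)) := by
  obtain ⟨hx, hdet, hsum⟩ := xtilde_spec hf P EH hrF hlt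
  have htop := phi_eq_top hx hconn hP0 hdisj hcover hne hEH hdet hsum
  constructor
  · intro i
    refine (tendsto_top_of_tsum_eq_top _ hx ?_).mono_left nhdsWithin_le_nhds
    refine (Afun_eq E f (P i.succ) w hx).trans ?_
    obtain ⟨v, hv⟩ := hne i.succ
    refine top_le_iff.1 (le_trans ?_ (ENNReal.le_tsum v))
    rw [ind_true hv, one_mul, totalSum_true_eq_top hx hconn htop]
  · refine (tendsto_top_of_tsum_eq_top _ hx ?_).mono_left nhdsWithin_le_nhds
    exact (phi_eq E f w hx).trans htop
end

section
/- Let 1 ≤ ℓ < m, let a_{ij} (1 ≤ i ≤ ℓ, 1 ≤ j ≤ m) and α_{ℓ+1}, …, α_m be real numbers, and let M be the m×m real matrix whose (i,j) entry equals a_{ij} − δ_{ij} when i ≤ ℓ and equals α_i − δ_{ij} when i > ℓ (so each row below the ℓ-th is constant before subtracting the identity). Let C be the upper-left ℓ×ℓ block of M and assume C is invertible. Then det M / ((−1)^{m−ℓ} det C) = 1 − ∑_{k=ℓ+1}^{m} α_k + ∑_{i=1}^{ℓ} (C⁻¹ u)_i, where u ∈ ℝ^ℓ has entries u_i = ∑_{k=ℓ+1}^{m}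 a_{ik} α_k. (In the paper's setting, with a_{ij} = α_{ij}(x) and α_k = α_k(x), this reads det M(x) / ((−1)^{m−ℓ} det C(x)) = 1 − ζ(x) − α_m(x) − α_{H,f,Ṽ_G}(x).) -/
/-!
Split `M` into blocks `C, B; β 1ᵀ, β 1ᵀ - I`, where `β = (α_{ℓ+1}, …, α_m)` and `B` is the
upper-right block. The Schur complement of `C` is `β wᵀ - I` with `wᵀ = 1ᵀ - 1ᵀ C⁻¹ B`, a rank-one
perturbation of `-I`, so the matrix determinant lemma gives
`det M = det C * (-1)^(m-ℓ) * (1 - wᵀ β)`. Since `u = B β`, the last factor is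
`1 - ∑ α_k + 1ᵀ C⁻¹ u`.
-/

open Matrix in
/-- The identity in block form, over arbitrary finite index types. -/
theorem det_fromBlocks_constRows {p q : Type*} [Fintype p] [DecidableEq p] [Fintype q]
    [DecidableEq q] (C : Matrix p p ℝ) (B : Matrix p q ℝ) (β : q → ℝ) (hC : IsUnit C.det) :
    (fromBlocks C B (of fun k _ => β k) ((of fun k _ => β k) - 1)).det =
      C.det * ((-1) ^ Fintype.card q * (1 - ∑ k, β k + ∑ i, (C⁻¹ *ᵥ (B *ᵥ β)) i)) := by
  let _ : Invertible C := invertibleOfIsUnitDet C hC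
  rw [det_fromBlocks₁₁, invOf_eq_nonsing_inv]
  have key : ((of fun k _ => β k : Matrix q q ℝ) - 1) -
      (of fun k _ => β k : Matrix q p ℝ) * C⁻¹ * B =
      -(1 + replicateCol Unit (-β) * replicateRow Unit (fun k => 1 - ∑ i, (C⁻¹ * B) i k)) := by
    ext j k
    rw [Matrix.mul_assoc]
    simp only [Matrix.sub_apply, Matrix.neg_apply, Matrix.add_apply, of_apply,
      Matrix.mul_apply (M := of _), Matrix.mul_apply (M := replicateCol _ _), ← Finset.mul_sum,
      replicateCol_apply, replicateRow_apply, Finset.univ_unique, Finset.sum_singleton,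
      Pi.neg_apply]
    ring
  rw [key, det_neg, det_one_add_replicateCol_mul_replicateRow, mulVec_mulVec]
  congr 2
  simp only [dotProduct, mulVec, Pi.neg_apply, sub_mul, one_mul, Finset.sum_sub_distrib,
    Finset.sum_mul, mul_neg, Finset.sum_neg_distrib]
  rw [Finset.sum_comm]
  ring

theorem sum_filter_le_val (ℓ n : ℕ) (f : Fin (ℓ + n) → ℝ) :
    ∑ k ∈ Finset.univ.filter (fun k : Fin (ℓ + n) => ℓ ≤ k.1), f k =
      ∑ k : Fin n, f (Fin.natAdd ℓ k) := by
  rw [Finset.sum_filter, Fin.sum_univ_add]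
  simp [Nat.not_le.mpr (Fin.is_lt _)]

/-- Determinant identity for a matrix whose rows below the `ℓ`-th are
constant before subtracting the identity. -/
theorem stmt10 (ℓ m : ℕ) (hl : 1 ≤ ℓ) (hlm : ℓ < m)
    (a : Fin m → Fin m → ℝ) (α : Fin m → ℝ)
    (M : Matrix (Fin m) (Fin m) ℝ)
    (hM : ∀ i j, M i j = (if i.1 < ℓ then a i j else α i) - if i = j then 1 else 0)
    (C : Matrix (Fin ℓ) (Fin ℓ) ℝ)
    (hC : ∀ i j : Fin ℓ,
      C i j = a (Fin.castLE hlm.le i) (Fin.castLE hlm.le j) - if i = j then 1 else 0)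
    (hCunit : IsUnit C.det)
    (u : Fin ℓ → ℝ)
    (hu : ∀ i : Fin ℓ, u i =
      ∑ k ∈ Finset.univ.filter (fun k : Fin m => ℓ ≤ k.1), a (Fin.castLE hlm.le i) k * α k) :
    M.det / ((-1 : ℝ) ^ (m - ℓ) * C.det) =
      1 - (∑ k ∈ Finset.univ.filter (fun k : Fin m => ℓ ≤ k.1), α k) +
        ∑ i : Fin ℓ, C⁻¹.mulVec u i := by
  obtain ⟨n, rfl⟩ := Nat.exists_eq_add_of_le hlm.le
  let B : Matrix (Fin ℓ) (Fin n) ℝ := fun i k => a (Fin.castAdd n i) (Fin.natAdd ℓ k)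
  let β : Fin n → ℝ := fun k => α (Fin.natAdd ℓ k)
  have hu' : u = B.mulVec β := by
    ext i
    rw [hu, sum_filter_le_val]
    rfl
  have hdet : M.det = (Matrix.fromBlocks C B (Matrix.of fun k _ => β k)
      ((Matrix.of fun k _ => β k) - 1)).det := by
    rw [← Matrix.det_submatrix_equiv_self finSumFinEquiv M]
    congr 1
    ext i j
    rcases i with i | i <;> rcases j with j | j
    · simp [hM, hC, Fin.ext_iff, Fin.castLE, Fin.castAdd]
    · have : i.1 ≠ ℓ + j.1 := by omega
      simp only [Matrix.fromBlocks_apply₁₂]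
      simp [hM, B, Fin.ext_iff, this]
    · have : ℓ + i.1 ≠ j.1 := by omega
      simp [hM, β, Fin.ext_iff, this]
    · simp [hM, β, Matrix.one_apply]
  rw [hdet, det_fromBlocks_constRows C B β hCunit, sum_filter_le_val, hu', Fintype.card_fin,
    Nat.add_sub_cancel_left]
  have h1 : C.det ≠ 0 := hCunit.ne_zero
  have h2 : ((-1 : ℝ)) ^ n ≠ 0 := by simp
  rw [div_eq_iff (mul_ne_zero h2 h1)]
  ring
end

section
/- Assume P = Id − B and C are invertible. Then for every 1 ≤ i ≤ ℓ, ∑_{v ∈ V_i} (P⁻¹ b)_v = −(C⁻¹ a)_i; that is, summing over each class the entries of the solution r of P r = b yields exactly the solution s of C s = −a. -/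
/-!
Let `r` solve `(1 - B) r = b` and let `s` be the vector of its class sums. Since adjacency depends
only on classes, `(B r)_v = x ^ f v * ∑ j, [i → j] s_j` for `v` in class `i`. Summing
`r_v = (B r)_v + b_v` over class `i` gives `s_i = (C s)_i + s_i + a_i`, so `C s = -a`, and
invertibility of `C` identifies `s` with `-C⁻¹ a`.
-/

open Classical

/-- Summing over each class the entries of the solution `r` of
`P r = b` (with `P = Id - B`) yields exactly the solution `s` of `C s = -a`. -/
theorem stmt11 {W : Type*} [Fintype W] (l : ℕ) (c : W → Fin l)
    (hc : Function.Surjective c)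
    (EH : Fin l → Fin l → Prop)
    (E : W → W → Prop) (hE : ∀ v v', E v v' ↔ EH (c v) (c v'))
    (f : W → ℝ) (hf : ∀ v, 0 < f v) (x : ℝ) (hx : 0 ≤ x)
    (eps : Fin l → ℝ) (heps : ∀ i, eps i = 0 ∨ eps i = 1)
    (B : Matrix W W ℝ)
    (hB : ∀ v v', B v v' = if EH (c v) (c v') then x ^ f v else 0)
    (C : Matrix (Fin l) (Fin l) ℝ)
    (hC : ∀ i j, C i j =
      (if EH i j then ∑ v ∈ Finset.univ.filter (fun v => c v = i), x ^ f v else 0) -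
        if i = j then 1 else 0)
    (hP : IsUnit ((1 : Matrix W W ℝ) - B).det) (hCu : IsUnit C.det)
    (b : W → ℝ) (hb : ∀ v, b v = eps (c v) * x ^ f v)
    (a : Fin l → ℝ)
    (ha : ∀ i, a i = eps i * ∑ v ∈ Finset.univ.filter (fun v => c v = i), x ^ f v) :
    ∀ i : Fin l,
      ∑ v ∈ Finset.univ.filter (fun v => c v = i),
        ((1 : Matrix W W ℝ) - B)⁻¹.mulVec b v = -(C⁻¹.mulVec a i) := by
  set r : W → ℝ := ((1 : Matrix W W ℝ) - B)⁻¹.mulVec b with hr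
  set s : Fin l → ℝ := fun i => ∑ v ∈ Finset.univ.filter (fun v => c v = i), r v with hs
  have hPr : ((1 : Matrix W W ℝ) - B).mulVec r = b := by
    rw [hr, Matrix.mulVec_mulVec, Matrix.mul_nonsing_inv _ hP, Matrix.one_mulVec]
  -- A row of `B` is constant on each class, so `B r` depends on `r` only through `s`.
  have hBr : ∀ v, B.mulVec r v = x ^ f v * ∑ j, if EH (c v) j then s j else 0 := by
    intro v
    have h1 : B.mulVec r v = ∑ v', x ^ f v * (if EH (c v) (c v') then r v' else 0) := by
      simp only [Matrix.mulVec, dotProduct, hB]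
      refine Finset.sum_congr rfl fun v' _ => ?_
      split_ifs <;> simp
    rw [h1, ← Finset.mul_sum, ← Finset.sum_fiberwise (s := Finset.univ) (g := c)]
    congr 1
    refine Finset.sum_congr rfl fun j _ => ?_
    rw [Finset.sum_congr rfl (g := fun v' => if EH (c v) j then r v' else 0)
      (fun v' hv' => by rw [(Finset.mem_filter.mp hv').2])]
    split_ifs <;> simp [hs]
  have hrow : ∀ v, r v = x ^ f v * (∑ j, if EH (c v) j then s j else 0)
      + eps (c v) * x ^ f v := by
    intro v
    have h := congrFun hPr v
    rw [Matrix.sub_mulVec, Matrix.one_mulVec, Pi.sub_apply, hBr, hb] at h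
    linarith
  have hCs : C.mulVec s = -a := by
    funext i
    have h1 : s i = (∑ v ∈ Finset.univ.filter (fun v => c v = i), x ^ f v)
        * (∑ j, if EH i j then s j else 0) + a i := by
      rw [ha, Finset.sum_mul, Finset.mul_sum, ← Finset.sum_add_distrib]
      refine Finset.sum_congr rfl fun v hv => ?_
      rw [hrow v, (Finset.mem_filter.mp hv).2]
    have h2 : C.mulVec s i = (∑ v ∈ Finset.univ.filter (fun v => c v = i), x ^ f v)
        * (∑ j, if EH i j then s j else 0) - s i := by
      simp only [Matrix.mulVec, dotProduct, hC, sub_mul, Finset.sum_sub_distrib, ite_mul,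
        zero_mul, one_mul, Finset.sum_ite_eq, Finset.mem_univ, if_true, Finset.mul_sum,
        mul_ite, mul_zero]
    rw [h2, Pi.neg_apply]
    linarith
  intro i
  have hfin : s = -(C⁻¹.mulVec a) := by
    rw [← Matrix.mulVec_neg, ← hCs, Matrix.mulVec_mulVec, Matrix.nonsing_inv_mul _ hCu,
      Matrix.one_mulVec]
  exact congrFun hfin i
end

section
/- For every x ≥ 0 such that the family (x^{f(v)})_{v ∈ V} is summable, the matrix series defining β^{G̃_w}(x) converges, and 1 + ∑_{v' ∈ Ṽ_G} x^{f(v')} − F_{f,V}(x) − α_{V(G̃_w),f,w}(x) > 0, one has φ_{G,f,w}(x) = φ_{G̃,f,w}(x) + x^{f(w)} (F_{f,V,w}(x) + α_{V(G̃_w)∖A_{G,w},f,w}(x)) (1 + σ_{G,f,w}(x)) / (1 + ∑_{v' ∈ Ṽ_G} x^{f(v')} − F_{f,V}(x) − α_{V(G̃_w),f,w}(x)). -/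
/-!
Write `a v = x ^ f v`. For a vertex `u`, let `h u` be the total weight of all paths of positive
length from `u` to `w` that avoid `w` strictly in between; a path weighs the product of `a` over
all its vertices but the last, so `φ_{G,f,w}(x) = h w`. Splitting off the first vertex of a path
gives the first-step equations (`passH_eq`)

  `h u = a u * ([E u w] + ∑_{v ≠ w, E u v} h v)`.

Put `M = 1 + ∑_{v ≠ w} h v`. A vertex `u ∉ T` has edges to every vertex, so `h u = a u * M`. On
`T ∖ {w}` the equations become the finite linear system `h = b + M c + B h`, where
`b v = [E v w] a v` and `c v = a v * F_v`, and `β = ∑ Bⁿ` is inverse to `1 - B`, so that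
`h = β (b + M c)` there (`firstStep_iff`). Summing over all vertices other than `w` gives
`M = 1 + σ + M (F + α)`, where `F` is the sum of `a` off `T` (`tsum_total`). The denominator in
the theorem is `1 - F - α`, hence `M = (1 + σ) / (1 - F - α)`; substituting this into the equation
at `w` yields the formula.

This computation needs `h` to be finite off `w`, with finite sum. In `[0,∞]` the function `h`
lies below every supersolution of the first-step equations (`passH_le`), and running the
computation backwards with `M := (1 + σ) / (1 - F - α)` produces a nonnegative summable solution
(`exists_firstStep`); this is where positivity of the denominator is used.
-/


open Classical Filter Topology Finset
open scoped ENNReal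

universe u

variable {V : Type u}

/-- The matrix series `β(x) = ∑_{n=0}^∞ B(x)^n`, entrywise. -/
noncomputable def betaMat {n : Type*} [Fintype n] [DecidableEq n]
    (B : Matrix n n ℝ) : Matrix n n ℝ :=
  fun v v' => ∑' k : ℕ, (B ^ k) v v'

/-! ### First-passage sums over paths -/

/-- `γ` is a path of length `n + 1` from `u` to `w` all of whose vertices strictly between the
first and the last one differ from `w`. The start `u` is allowed to be `w`. -/
def FirstPass (E : V → V → Prop) (w : V) (n : ℕ) (u : V) (γ : Fin (n + 2) → V) : Prop :=
  IsWalk E (n + 1) γ ∧ γ 0 = u ∧ γ (Fin.last (n + 1)) = w ∧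
    ∀ i : Fin (n + 2), i ≠ 0 → i ≠ Fin.last (n + 1) → γ i ≠ w

/-- The total weight of the first-passage paths of length `n + 1` from `u` to `w`, where a path
has the product of the weights `a` of all its vertices except the last. -/
noncomputable def passN (E : V → V → Prop) (a : V → ℝ≥0∞) (w : V) (n : ℕ) (u : V) : ℝ≥0∞ :=
  ∑' γ : Fin (n + 2) → V,
    if FirstPass E w n u γ then ∏ i : Fin (n + 1), a (γ i.castSucc) else 0

/-- The total weight of the first-passage paths of any positive length from `u` to `w`. -/
noncomputable def passH (E : V → V → Prop) (a : V → ℝ≥0∞) (w : V) (u : V) : ℝ≥0∞ :=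
  ∑' n : ℕ, passN E a w n u

lemma firstPass_cons (E : V → V → Prop) (w : V) (n : ℕ) (u v : V) (γ : Fin (n + 2) → V) :
    FirstPass E w (n + 1) u (Fin.cons v γ : Fin (n + 1 + 2) → V) ↔
      v = u ∧ (E u (γ 0) ∧ γ 0 ≠ w) ∧ FirstPass E w n (γ 0) γ := by
  have hlast : (Fin.last (n + 1 + 1)) = (Fin.last (n + 1)).succ := rfl
  have hw : IsWalk E (n + 1 + 1) (Fin.cons v γ : Fin (n + 1 + 2) → V) ↔
      E v (γ 0) ∧ IsWalk E (n + 1) γ := by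
    unfold IsWalk
    rw [Fin.forall_fin_succ]
    simp only [Fin.castSucc_zero, Fin.cons_zero, Fin.cons_succ, ← Fin.succ_castSucc]
  unfold FirstPass
  rw [hw, Fin.forall_fin_succ, hlast]
  simp only [Fin.cons_zero, Fin.cons_succ]
  constructor
  · rintro ⟨⟨h1, h2⟩, rfl, h3, -, h4⟩
    refine ⟨rfl, ⟨h1, ?_⟩, h2, trivial, h3, fun i _ hi => h4 i (Fin.succ_ne_zero i) ?_⟩
    · exact h4 0 (Fin.succ_ne_zero 0) (fun h => by simp [Fin.ext_iff] at h)
    · exact fun h => hi (Fin.succ_injective _ h)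
  · rintro ⟨rfl, ⟨h1, h2⟩, h3, -, h4, h5⟩
    refine ⟨⟨h1, h3⟩, rfl, h4, fun h => (h rfl).elim, fun i _ hi => ?_⟩
    by_cases h0 : i = 0
    · rw [h0]; exact h2
    · exact h5 i h0 (fun h => hi (by rw [h]))

lemma passN_zero (E : V → V → Prop) (a : V → ℝ≥0∞) (w u : V) :
    passN E a w 0 u = a u * (if E u w then 1 else 0) := by
  unfold passN
  rw [tsum_eq_single (![u, w] : Fin 2 → V)]
  · have : FirstPass E w 0 u ![u, w] ↔ E u w := by
      unfold FirstPass IsWalk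
      constructor
      · rintro ⟨h, -⟩
        exact h 0
      · intro h
        refine ⟨fun k => ?_, rfl, rfl, fun i h0 h1 => ?_⟩
        · fin_cases k; exact h
        · fin_cases i
          · exact (h0 rfl).elim
          · exact (h1 rfl).elim
    simp only [this]
    split_ifs <;> simp
  · intro γ hγ
    rw [if_neg]
    rintro ⟨-, h0, h1, -⟩
    apply hγ
    ext i
    fin_cases i
    · exact h0
    · exact h1

/-- Decomposition of a first-passage path according to its second vertex. -/
lemma passN_succ (E : V → V → Prop) (a : V → ℝ≥0∞) (w : V) (n : ℕ) (u : V) :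
    passN E a w (n + 1) u =
      a u * ∑' v : V, if E u v ∧ v ≠ w then passN E a w n v else 0 := by
  have hR : (a u * ∑' v : V, if E u v ∧ v ≠ w then passN E a w n v else 0) =
      ∑' (γ : Fin (n + 2) → V) (v : V), a u * (if E u v ∧ v ≠ w then
        (if FirstPass E w n v γ then ∏ i : Fin (n + 1), a (γ i.castSucc) else 0) else 0) := by
    rw [ENNReal.tsum_comm, ← ENNReal.tsum_mul_left]
    refine tsum_congr fun v => ?_
    rw [ENNReal.tsum_mul_left]
    split_ifs
    · rfl
    · simp
  rw [hR]
  unfold passN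
  rw [← (Fin.consEquiv fun _ : Fin (n + 1 + 2) => V).tsum_eq]
  rw [ENNReal.tsum_prod (f := fun v γ => if FirstPass E w (n + 1) u
      ((Fin.consEquiv fun _ : Fin (n + 1 + 2) => V) (v, γ)) then
      ∏ i : Fin (n + 1 + 1), a (((Fin.consEquiv fun _ : Fin (n + 1 + 2) => V) (v, γ)) i.castSucc)
      else 0)]
  rw [ENNReal.tsum_comm]
  refine tsum_congr fun γ => ?_
  rw [tsum_eq_single u, tsum_eq_single (γ 0)]
  · have key : FirstPass E w (n + 1) u ((Fin.consEquiv fun _ : Fin (n + 1 + 2) => V) (u, γ)) ↔ _ :=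
      firstPass_cons E w n u u γ
    rw [key]
    simp only [Fin.consEquiv_apply]
    by_cases h1 : E u (γ 0) ∧ γ 0 ≠ w
    · by_cases h2 : FirstPass E w n (γ 0) γ
      · simp only [h1, h2, if_true, true_and]
        rw [Fin.prod_univ_succ]
        simp
      · simp [h2]
    · rw [if_neg (fun h => h1 h.2.1), if_neg h1, mul_zero]
  · intro v hv
    rw [if_neg (fun h : FirstPass E w n v γ => hv h.2.1.symm)]
    simp
  · intro v hv
    exact if_neg (fun h => hv ((firstPass_cons E w n u v γ).1 h).1)

/-- First-step equation for the first-passage sums. -/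
lemma passH_eq (E : V → V → Prop) (a : V → ℝ≥0∞) (w u : V) :
    passH E a w u = a u * ((if E u w then 1 else 0) +
      ∑' v : V, if E u v ∧ v ≠ w then passH E a w v else 0) := by
  conv_lhs => rw [passH, tsum_eq_zero_add' ENNReal.summable]
  simp only [passN_succ, passN_zero]
  rw [ENNReal.tsum_mul_left, ENNReal.tsum_comm, ← mul_add]
  congr 2
  refine tsum_congr fun v => ?_
  split_ifs
  · rfl
  · simp

/-- The first-passage sums are dominated by every supersolution of the first-step equation off
`w`; hence they are finite as soon as that equation has a finite solution. -/
lemma passH_le (E : V → V → Prop) (a : V → ℝ≥0∞) (w : V) (g : V → ℝ≥0∞)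
    (hg : ∀ u, u ≠ w → a u * ((if E u w then 1 else 0) +
      ∑' v : V, if E u v ∧ v ≠ w then g v else 0) ≤ g u) (u : V) (hu : u ≠ w) :
    passH E a w u ≤ g u := by
  refine ENNReal.tsum_le_of_sum_range_le fun N => ?_
  induction N generalizing u with
  | zero => simp
  | succ N ih =>
    rw [Finset.sum_range_succ']
    simp only [passN_succ, passN_zero]
    refine le_trans ?_ (hg u hu)
    rw [← Finset.mul_sum, ← mul_add, add_comm]
    gcongr
    rw [← Summable.tsum_finsetSum (fun _ _ => ENNReal.summable)]
    refine ENNReal.tsum_le_tsum fun v => ?_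
    split_ifs with h
    · exact ih v h.2
    · simp

lemma phiR_eq_passH (E : V → V → Prop) (f : V → ℝ) (hf : ∀ v, 0 < f v) (w : V) (x : ℝ)
    (hx : 0 ≤ x) :
    phiR E f w x = (passH E (fun v => ENNReal.ofReal (x ^ f v)) w w).toReal := by
  have h1 : phiR E f w x = (phi E f w x).toReal := by
    unfold phiR phi
    rw [ENNReal.tsum_toReal_eq (fun _ => ENNReal.ofReal_ne_top)]
    exact tsum_congr fun γ => (ENNReal.toReal_ofReal (Real.rpow_nonneg hx _)).symm
  rw [h1]
  congr 1
  unfold phi passH passN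
  rw [tsum_subtype (SimpleCycle E w) (fun γ => ENNReal.ofReal (x ^ fStar f γ.1 γ.2)),
    ← ENNReal.tsum_sigma (fun (n : ℕ) (γ : Fin (n + 2) → V) => if FirstPass E w n w γ then
      ∏ i : Fin (n + 1), ENNReal.ofReal (x ^ f (γ i.castSucc)) else 0)]
  refine tsum_congr fun p => ?_
  rw [Set.indicator_apply, fStar, Real.rpow_sum_of_nonneg hx (fun i _ => (hf _).le),
    ENNReal.ofReal_prod_of_nonneg (fun i _ => Real.rpow_nonneg hx _)]
  rfl

/-! ### The geometric series of a nonnegative matrix -/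

section Geometric

variable {n : Type*} [Fintype n] [DecidableEq n] {B : Matrix n n ℝ}

lemma betaMat_eq_tsum (hB : ∀ i j, Summable fun k : ℕ => (B ^ k) i j) :
    (Summable fun k : ℕ => B ^ k) ∧ betaMat B = ∑' k : ℕ, B ^ k := by
  have h : HasSum (fun k : ℕ => B ^ k) (betaMat B) := by
    refine Pi.hasSum.2 fun i => Pi.hasSum.2 fun j => ?_
    exact (hB i j).hasSum
  exact ⟨h.summable, h.tsum_eq.symm⟩

lemma betaMat_mul (hB : ∀ i j, Summable fun k : ℕ => (B ^ k) i j) :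
    betaMat B * (1 - B) = 1 := by
  obtain ⟨h1, h2⟩ := betaMat_eq_tsum hB
  rw [h2]
  exact h1.tsum_pow_mul_one_sub

lemma mul_betaMat (hB : ∀ i j, Summable fun k : ℕ => (B ^ k) i j) :
    (1 - B) * betaMat B = 1 := by
  obtain ⟨h1, h2⟩ := betaMat_eq_tsum hB
  rw [h2]
  exact h1.one_sub_mul_tsum_pow

lemma betaMat_nonneg (h0 : ∀ i j, 0 ≤ B i j) (i j : n) : 0 ≤ betaMat B i j := by
  refine tsum_nonneg fun k => ?_
  induction k generalizing i j with
  | zero => rw [pow_zero, Matrix.one_apply]; split_ifs <;> norm_num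
  | succ k ih =>
    rw [pow_succ, Matrix.mul_apply]
    exact Finset.sum_nonneg fun l _ => mul_nonneg (ih i l) (h0 l j)

/-- `β y` is the unique solution `φ` of `φ = y + B φ`. -/
lemma eq_betaMat_mulVec_iff (hB : ∀ i j, Summable fun k : ℕ => (B ^ k) i j) (φ y : n → ℝ) :
    φ = Matrix.mulVec (betaMat B) y ↔ φ = y + Matrix.mulVec B φ := by
  constructor
  · rintro rfl
    have h : Matrix.mulVec ((1 - B) * betaMat B) y = y := by
      rw [mul_betaMat hB, Matrix.one_mulVec]
    rw [← Matrix.mulVec_mulVec, Matrix.sub_mulVec, Matrix.one_mulVec] at h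
    exact sub_eq_iff_eq_add.1 h
  · intro h
    have h1 : Matrix.mulVec (1 - B) φ = y := by
      rw [Matrix.sub_mulVec, Matrix.one_mulVec]
      exact sub_eq_iff_eq_add.2 h
    rw [← h1, Matrix.mulVec_mulVec, betaMat_mul hB, Matrix.one_mulVec]

end Geometric

/-! ### The first-step equations off the special vertex -/

/-- A sum over the vertices `u ≠ w` satisfying `p` splits into its parts inside and outside the
exceptional finite set `T ∋ w`. -/
lemma tsum_split (T : Finset V) (w : V) (hw : w ∈ T) (φ : V → ℝ) (hφ : Summable φ)
    (p : V → Prop) :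
    (∑' u, if p u ∧ u ≠ w then φ u else 0) =
      (∑ v : {v : V // v ∈ T.erase w}, if p v.1 then φ v.1 else 0) +
        ∑' u : {u : V // p u ∧ u ∉ T}, φ u.1 := by
  have h1 : (∑ v : {v : V // v ∈ T.erase w}, if p v.1 then φ v.1 else 0) =
      ∑' u, if p u ∧ u ∈ T.erase w then φ u else 0 := by
    rw [Finset.sum_coe_sort (T.erase w) (fun v => if p v then φ v else 0),
      tsum_eq_sum (s := T.erase w)]
    · refine Finset.sum_congr rfl fun v hv => ?_
      simp only [hv, and_true]
    · intro v hv
      exact if_neg fun h => hv h.2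
  have h2 : (∑' u : {u : V // p u ∧ u ∉ T}, φ u.1) =
      ∑' u, if p u ∧ u ∉ T then φ u else 0 := by
    refine (_root_.tsum_subtype {u : V | p u ∧ u ∉ T} φ).trans (tsum_congr fun u => ?_)
    simp [Set.indicator_apply]
  rw [h1, h2, ← Summable.tsum_add]
  · refine tsum_congr fun u => ?_
    by_cases hp : p u <;> by_cases hu : u = w <;> by_cases hT : u ∈ T <;> simp_all
  · exact (hφ.indicator {u | p u ∧ u ∈ T.erase w}).congr fun u => by simp [Set.indicator_apply]
  · exact (hφ.indicator {u | p u ∧ u ∉ T}).congr fun u => by simp [Set.indicator_apply]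

lemma tsum_notMem (T : Finset V) (a : V → ℝ) (ha : Summable a) :
    (∑' u : {u : V // True ∧ u ∉ T}, a u.1) = (∑' v, a v) - ∑ v ∈ T, a v := by
  rw [← ha.sum_add_tsum_subtype_compl T, add_sub_cancel_left]
  exact (Equiv.subtypeEquivRight (fun u => by simp)).tsum_eq
    (fun u : {u : V // u ∉ T} => a u.1)

/-- Let `φ` be summable and equal to `M a` off `T`. Then `φ` solves the first-step equations on
`T ∖ {w}` if and only if its restriction there is `β (b + M c)`, where `b` collects the one-step
passages to `w` and `c` the exits from `T`. -/
lemma firstStep_iff (E : V → V → Prop) (T : Finset V)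
    (w : V) (hw : w ∈ T) (a : V → ℝ)
    (B : Matrix {v : V // v ∈ T.erase w} {v : V // v ∈ T.erase w} ℝ)
    (hB : ∀ v v' : {v : V // v ∈ T.erase w}, B v v' = if E v.1 v'.1 then a v.1 else 0)
    (hBconv : ∀ v v' : {v : V // v ∈ T.erase w}, Summable fun n : ℕ => (B ^ n) v v')
    (φ : V → ℝ) (hφ : Summable φ) (M : ℝ) (hM : ∀ u, u ∉ T → φ u = a u * M) :
    (∀ v ∈ T.erase w, φ v = a v * ((if E v w then 1 else 0) +
        ∑' u, if E v u ∧ u ≠ w then φ u else 0)) ↔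
      (fun v : {v : V // v ∈ T.erase w} => φ v.1) =
        Matrix.mulVec (betaMat B) (fun v => (if E v.1 w then a v.1 else 0) +
          M * (a v.1 * ∑' u : {u : V // E v.1 u ∧ u ∉ T}, a u.1)) := by
  rw [eq_betaMat_mulVec_iff hBconv, funext_iff, Subtype.forall]
  refine forall₂_congr fun v hv => ?_
  have hout : (∑' u : {u : V // E v u ∧ u ∉ T}, φ u.1) =
      (∑' u : {u : V // E v u ∧ u ∉ T}, a u.1) * M := by
    rw [← tsum_mul_right]
    exact tsum_congr fun u => hM u.1 u.2.2
  rw [tsum_split T w hw φ hφ (E v), hout]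
  have hmul : (Matrix.mulVec B fun v : {v : V // v ∈ T.erase w} => φ v.1) ⟨v, hv⟩ =
      a v * ∑ u : {v : V // v ∈ T.erase w}, if E v u.1 then φ u.1 else 0 := by
    simp only [Matrix.mulVec, dotProduct, hB, Finset.mul_sum, ite_mul, zero_mul, mul_ite, mul_zero]
  rw [Pi.add_apply, hmul]
  have : (if E v w then a v else 0) = a v * (if E v w then 1 else 0) := by simp
  simp only [this]
  constructor <;> intro h <;> rw [h] <;> ring

/-- For `φ` as described by `firstStep_iff`, its sum over the vertices `u ≠ w` satisfying `p` is an
affine function of `M`. -/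
lemma tsum_formula (E : V → V → Prop) (T : Finset V) (w : V) (hw : w ∈ T) (a : V → ℝ)
    (β : Matrix {v : V // v ∈ T.erase w} {v : V // v ∈ T.erase w} ℝ)
    (φ : V → ℝ) (hφ : Summable φ) (M : ℝ) (hM : ∀ u, u ∉ T → φ u = a u * M)
    (hβ : (fun v : {v : V // v ∈ T.erase w} => φ v.1) =
        Matrix.mulVec β (fun v => (if E v.1 w then a v.1 else 0) +
          M * (a v.1 * ∑' u : {u : V // E v.1 u ∧ u ∉ T}, a u.1)))
    (p : V → Prop) :
    (∑' u, if p u ∧ u ≠ w then φ u else 0) =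
      (∑ v' ∈ Finset.univ.filter (fun v' : {v : V // v ∈ T.erase w} => p v'.1),
        ∑ v'' ∈ Finset.univ.filter (fun v'' : {v : V // v ∈ T.erase w} => E v''.1 w),
          β v' v'' * a v''.1) +
      M * ((∑' u : {u : V // p u ∧ u ∉ T}, a u.1) +
        ∑ v' ∈ Finset.univ.filter (fun v' : {v : V // v ∈ T.erase w} => p v'.1),
          ∑ v'' : {v : V // v ∈ T.erase w},
            β v' v'' * a v''.1 * (∑' u : {u : V // E v''.1 u ∧ u ∉ T}, a u.1)) := by
  rw [tsum_split T w hw φ hφ p, ← Finset.sum_filter]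
  have hout : (∑' u : {u : V // p u ∧ u ∉ T}, φ u.1) =
      M * ∑' u : {u : V // p u ∧ u ∉ T}, a u.1 := by
    rw [← tsum_mul_left]
    exact tsum_congr fun u => (hM u.1 u.2.2).trans (mul_comm _ _)
  have hin : ∀ v' : {v : V // v ∈ T.erase w}, φ v'.1 =
      (∑ v'' ∈ Finset.univ.filter (fun v'' : {v : V // v ∈ T.erase w} => E v''.1 w),
          β v' v'' * a v''.1) +
      M * ∑ v'' : {v : V // v ∈ T.erase w},
            β v' v'' * a v''.1 * (∑' u : {u : V // E v''.1 u ∧ u ∉ T}, a u.1) := by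
    intro v'
    rw [show φ v'.1 = _ from congrFun hβ v']
    simp only [Matrix.mulVec, dotProduct, mul_add, Finset.sum_add_distrib]
    rw [Finset.sum_filter, Finset.mul_sum]
    congr 1
    · exact Finset.sum_congr rfl fun v _ => by split_ifs <;> simp
    · exact Finset.sum_congr rfl fun v _ => by ring
  rw [hout, Finset.sum_congr rfl fun v' _ => hin v', Finset.sum_add_distrib, ← Finset.mul_sum]
  ring

/-- For `φ` as described by `firstStep_iff` and vanishing at `w`, the total mass is `σ + M (F + α)`,
where `F` is the sum of `a` off `T`. -/
lemma tsum_total (E : V → V → Prop) (T : Finset V) (w : V) (hw : w ∈ T) (a : V → ℝ)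
    (ha : Summable a)
    (β : Matrix {v : V // v ∈ T.erase w} {v : V // v ∈ T.erase w} ℝ)
    (φ : V → ℝ) (hφ : Summable φ) (hφw : φ w = 0) (M : ℝ) (hM : ∀ u, u ∉ T → φ u = a u * M)
    (hβ : (fun v : {v : V // v ∈ T.erase w} => φ v.1) =
        Matrix.mulVec β (fun v => (if E v.1 w then a v.1 else 0) +
          M * (a v.1 * ∑' u : {u : V // E v.1 u ∧ u ∉ T}, a u.1))) :
    (∑' u, φ u) =
      (∑ v' : {v : V // v ∈ T.erase w},
        ∑ v'' ∈ Finset.univ.filter (fun v'' : {v : V // v ∈ T.erase w} => E v''.1 w),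
          β v' v'' * a v''.1) +
      M * ((∑' v, a v) - (∑ v ∈ T, a v) +
        ∑ v' : {v : V // v ∈ T.erase w}, ∑ v'' : {v : V // v ∈ T.erase w},
            β v' v'' * a v''.1 * (∑' u : {u : V // E v''.1 u ∧ u ∉ T}, a u.1)) := by
  have h := tsum_formula E T w hw a β φ hφ M hM hβ (fun _ => True)
  rw [tsum_notMem T a ha, Finset.filter_true] at h
  rw [← h]
  refine tsum_congr fun u => ?_
  by_cases hu : u = w <;> simp [hu, hφw]

/-- Existence: if the denominator is positive, then `β (b + M c)` on `T ∖ {w}` and `M a` off `T`,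
with `M = (1 + σ) / den`, is a nonnegative summable solution of the first-step equations. -/
lemma exists_firstStep (E : V → V → Prop) (T : Finset V) (hT : ∀ v, v ∈ T ↔ ∃ v', ¬ E v v')
    (w : V) (hw : w ∈ T) (a : V → ℝ) (ha0 : ∀ v, 0 ≤ a v) (ha : Summable a)
    (B : Matrix {v : V // v ∈ T.erase w} {v : V // v ∈ T.erase w} ℝ)
    (hB : ∀ v v' : {v : V // v ∈ T.erase w}, B v v' = if E v.1 v'.1 then a v.1 else 0)
    (hBconv : ∀ v v' : {v : V // v ∈ T.erase w}, Summable fun n : ℕ => (B ^ n) v v')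
    (hden : 0 < 1 + (∑ v ∈ T, a v) - (∑' v : V, a v) -
      ∑ v' : {v : V // v ∈ T.erase w}, ∑ v'' : {v : V // v ∈ T.erase w}, betaMat B v' v'' * a v''.1 * (∑' u : {u : V // E v''.1 u ∧ u ∉ T}, a u.1)) :
    ∃ φ : V → ℝ, Summable φ ∧ (∀ u, 0 ≤ φ u) ∧
      ∀ u, u ≠ w → φ u = a u * ((if E u w then 1 else 0) +
        ∑' v, if E u v ∧ v ≠ w then φ v else 0) := by
  have hβ0 : ∀ v v', 0 ≤ betaMat B v v' := betaMat_nonneg fun i j => by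
    rw [hB]; split_ifs
    · exact ha0 _
    · exact le_rfl
  set α := ∑ v' : {v : V // v ∈ T.erase w}, ∑ v'' : {v : V // v ∈ T.erase w},
    betaMat B v' v'' * a v''.1 * (∑' u : {u : V // E v''.1 u ∧ u ∉ T}, a u.1) with hα
  set σ := ∑ v' : {v : V // v ∈ T.erase w},
    ∑ v'' ∈ Finset.univ.filter (fun v'' : {v : V // v ∈ T.erase w} => E v''.1 w),
      betaMat B v' v'' * a v''.1 with hσ
  have hσ0 : 0 ≤ σ := Finset.sum_nonneg fun i _ => Finset.sum_nonneg fun j _ =>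
    mul_nonneg (hβ0 i j) (ha0 _)
  obtain ⟨M, hMdef⟩ : ∃ M, M = (1 + σ) / (1 + (∑ v ∈ T, a v) - (∑' v : V, a v) - α) := ⟨_, rfl⟩
  have hM0 : 0 ≤ M := by rw [hMdef]; exact div_nonneg (by linarith) hden.le
  have hMeq : M * (1 + (∑ v ∈ T, a v) - (∑' v : V, a v) - α) = 1 + σ := by
    rw [hMdef]; exact div_mul_cancel₀ _ hden.ne'
  set y : {v : V // v ∈ T.erase w} → ℝ := fun v => (if E v.1 w then a v.1 else 0) +
          M * (a v.1 * ∑' u : {u : V // E v.1 u ∧ u ∉ T}, a u.1) with hy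
  have hy0 : ∀ v, 0 ≤ y v := fun v => by
    refine add_nonneg ?_ (mul_nonneg hM0 (mul_nonneg (ha0 _) (tsum_nonneg fun u => ha0 _)))
    split_ifs
    · exact ha0 _
    · exact le_rfl
  set φ : V → ℝ := fun u => if h : u ∈ T.erase w then Matrix.mulVec (betaMat B) y ⟨u, h⟩ else
    if u = w then 0 else a u * M with hφdef
  have hφw : φ w = 0 := by simp [hφdef]
  have hφM : ∀ u, u ∉ T → φ u = a u * M := fun u hu => by
    have h1 : u ∉ T.erase w := fun h => hu (Finset.mem_of_mem_erase h)
    have h2 : u ≠ w := fun h => hu (h ▸ hw)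
    simp only [hφdef, dif_neg h1, if_neg h2]
  have hφs : Summable φ := by
    refine (ha.mul_right M).congr_cofinite ?_
    refine T.finite_toSet.subset fun u hu => ?_
    by_contra h
    exact hu (hφM u h).symm
  have hφβ : (fun v : {v : V // v ∈ T.erase w} => φ v.1) = Matrix.mulVec (betaMat B) y := by
    funext v
    simp only [hφdef, dif_pos v.2]
  have htot := tsum_total E T w hw a ha (betaMat B) φ hφs hφw M hφM hφβ
  have hMtot : 1 + ∑' u, φ u = M := by
    rw [htot]; linarith
  refine ⟨φ, hφs, fun u => ?_, fun u hu => ?_⟩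
  · simp only [hφdef]
    split_ifs
    · exact Finset.sum_nonneg fun j _ => mul_nonneg (hβ0 _ j) (hy0 j)
    · exact le_rfl
    · exact mul_nonneg (ha0 _) hM0
  · by_cases huT : u ∈ T
    · exact (firstStep_iff E T w hw a B hB hBconv φ hφs M hφM).2 hφβ u
        (Finset.mem_erase.2 ⟨hu, huT⟩)
    · -- off `T` every edge is present, so the equation only involves the total mass
      have hE : ∀ v, E u v := fun v => by
        by_contra h
        exact huT ((hT u).2 ⟨v, h⟩)
      rw [hφM u huT, if_pos (hE w), ← hMtot]
      congr 2
      refine tsum_congr fun v => ?_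
      by_cases hv : v = w <;> simp [hv, hφw, hE v]

/-! ### Evaluation of the generating function -/

/-- Polyakov's formula for the generating function of a local
perturbation of a countable topological Bernoulli scheme. -/
theorem stmt12 [Countable V] [Infinite V]
    (E : V → V → Prop) (f : V → ℝ) (hf : ∀ v, 0 < f v)
    (hD : {p : V × V | ¬ E p.1 p.2}.Finite)
    (hconn : ∀ u v : V, Relation.ReflTransGen E u v)
    (T : Finset V) (hT : ∀ v, v ∈ T ↔ ∃ v', ¬ E v v')
    (w : V) (hw : w ∈ T)
    (x : ℝ) (hx : 0 ≤ x)
    (hsum : Summable fun v : V => x ^ f v)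
    (B : Matrix {v : V // v ∈ T.erase w} {v : V // v ∈ T.erase w} ℝ)
    (hB : ∀ v v' : {v : V // v ∈ T.erase w}, B v v' = if E v.1 v'.1 then x ^ f v.1 else 0)
    (hBconv : ∀ v v' : {v : V // v ∈ T.erase w}, Summable fun n : ℕ => (B ^ n) v v')
    (hden : 0 < 1 + (∑ v ∈ T, x ^ f v) - (∑' v : V, x ^ f v) -
      ∑ v' : {v : V // v ∈ T.erase w}, ∑ v'' : {v : V // v ∈ T.erase w}, betaMat B v' v'' * x ^ f v''.1 * (∑' u : {u : V // E v''.1 u ∧ u ∉ T}, x ^ f u.1)) :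
    phiR E f w x =
      (x ^ f w *
          (∑ v' ∈ Finset.univ.filter (fun v' : {v : V // v ∈ T.erase w} => E w v'.1),
            ∑ v'' ∈ Finset.univ.filter (fun v'' : {v : V // v ∈ T.erase w} => E v''.1 w),
              betaMat B v' v'' * x ^ f v''.1) +
        (if E w w then x ^ f w else 0)) +
      x ^ f w *
        ((∑' u : {u : V // E w u ∧ u ∉ T}, x ^ f u.1) +
          ∑ v' ∈ Finset.univ.filter (fun v' : {v : V // v ∈ T.erase w} => E w v'.1),
            ∑ v'' : {v : V // v ∈ T.erase w}, betaMat B v' v'' * x ^ f v''.1 * (∑' u : {u : V // E v''.1 u ∧ u ∉ T}, x ^ f u.1)) *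
        (1 + ∑ v' : {v : V // v ∈ T.erase w},
          ∑ v'' ∈ Finset.univ.filter (fun v'' : {v : V // v ∈ T.erase w} => E v''.1 w),
            betaMat B v' v'' * x ^ f v''.1) /
        (1 + (∑ v ∈ T, x ^ f v) - (∑' v : V, x ^ f v) -
          ∑ v' : {v : V // v ∈ T.erase w}, ∑ v'' : {v : V // v ∈ T.erase w}, betaMat B v' v'' * x ^ f v''.1 * (∑' u : {u : V // E v''.1 u ∧ u ∉ T}, x ^ f u.1)) := by
  set a : V → ℝ := fun v => x ^ f v with ha
  have ha0 : ∀ v, 0 ≤ a v := fun v => Real.rpow_nonneg hx _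
  obtain ⟨ψ, hψs, hψ0, hψ⟩ := exists_firstStep E T hT w hw a ha0 hsum B hB hBconv hden
  set h : V → ℝ≥0∞ := passH E (fun v => ENNReal.ofReal (x ^ f v)) w with hh
  -- the first-passage sums are dominated by the explicit solution `ψ`
  have hle : ∀ u, u ≠ w → h u ≤ ENNReal.ofReal (ψ u) := by
    refine passH_le E _ w (fun u => ENNReal.ofReal (ψ u)) fun u hu => ?_
    have hnn : ∀ v, 0 ≤ if E u v ∧ v ≠ w then ψ v else 0 := fun v => by
      split_ifs
      · exact hψ0 v
      · exact le_rfl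
    have hs : Summable fun v => if E u v ∧ v ≠ w then ψ v else 0 :=
      (hψs.indicator {v | E u v ∧ v ≠ w}).congr fun v => by simp [Set.indicator_apply]
    have h1 : (∑' v, if E u v ∧ v ≠ w then ENNReal.ofReal (ψ v) else 0) =
        ENNReal.ofReal (∑' v, if E u v ∧ v ≠ w then ψ v else 0) := by
      rw [ENNReal.ofReal_tsum_of_nonneg hnn hs]
      exact tsum_congr fun v => by split_ifs <;> simp
    have h2 : (if E u w then (1 : ℝ≥0∞) else 0) = ENNReal.ofReal (if E u w then 1 else 0) := by
      split_ifs <;> simp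
    have h3 : (0 : ℝ) ≤ if E u w then 1 else 0 := by split_ifs <;> norm_num
    rw [h1, h2, ← ENNReal.ofReal_add h3 (tsum_nonneg hnn), ← ENNReal.ofReal_mul (ha0 u)]
    exact (congrArg ENNReal.ofReal (hψ u hu)).ge
  have hfin : ∀ u, u ≠ w → h u ≠ ⊤ := fun u hu =>
    ne_top_of_le_ne_top ENNReal.ofReal_ne_top (hle u hu)
  set φ : V → ℝ := fun u => if u = w then 0 else (h u).toReal with hφdef
  have hφw : φ w = 0 := if_pos rfl
  have hφs : Summable φ := by
    refine Summable.of_nonneg_of_le (fun u => ?_) (fun u => ?_) hψs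
    · simp only [hφdef]
      split_ifs
      · exact le_rfl
      · exact ENNReal.toReal_nonneg
    · simp only [hφdef]
      split_ifs with hu
      · exact hψ0 u
      · exact ENNReal.toReal_le_of_le_ofReal (hψ0 u) (hle u hu)
  have heq : ∀ u, (h u).toReal = a u * ((if E u w then 1 else 0) +
      ∑' v, if E u v ∧ v ≠ w then φ v else 0) := by
    intro u
    have hne : ∀ v, (if E u v ∧ v ≠ w then h v else 0) ≠ ⊤ := fun v => by
      split_ifs with hv
      · exact hfin v hv.2
      · simp
    have h1 : (∑' v, if E u v ∧ v ≠ w then φ v else 0) =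
        (∑' v, if E u v ∧ v ≠ w then h v else 0).toReal := by
      rw [ENNReal.tsum_toReal_eq hne]
      refine tsum_congr fun v => ?_
      split_ifs with hv
      · simp only [hφdef, if_neg hv.2]
      · simp
    have hS : (∑' v, if E u v ∧ v ≠ w then h v else 0) ≠ ⊤ := by
      refine ne_top_of_le_ne_top (b := ∑' v, ENNReal.ofReal (ψ v)) ?_
        (ENNReal.tsum_le_tsum fun v => ?_)
      · rw [← ENNReal.ofReal_tsum_of_nonneg hψ0 hψs]
        exact ENNReal.ofReal_ne_top
      · split_ifs with hv
        · exact hle v hv.2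
        · simp
    rw [h1, hh, passH_eq, ENNReal.toReal_mul, ENNReal.toReal_add (by split_ifs <;> simp) hS,
      ENNReal.toReal_ofReal (ha0 u)]
    congr 2
    split_ifs <;> simp
  -- `M` is one plus the total mass of `φ`
  obtain ⟨M, hMdef⟩ : ∃ M, M = 1 + ∑' u, φ u := ⟨_, rfl⟩
  have hφM : ∀ u, u ∉ T → φ u = a u * M := by
    intro u huT
    have hE : ∀ v, E u v := fun v => by
      by_contra h
      exact huT ((hT u).2 ⟨v, h⟩)
    have hu : u ≠ w := fun h => huT (h ▸ hw)
    have h1 : φ u = (h u).toReal := if_neg hu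
    rw [h1, heq u, if_pos (hE w), hMdef]
    congr 2
    refine tsum_congr fun v => ?_
    by_cases hv : v = w <;> simp [hv, hφw, hE v]
  have hφβ := (firstStep_iff E T w hw a B hB hBconv φ hφs M hφM).1 fun v hv => by
    rw [← heq v]
    exact if_neg (Finset.ne_of_mem_erase hv)
  have htot := tsum_total E T w hw a hsum (betaMat B) φ hφs hφw M hφM hφβ
  have hform := tsum_formula E T w hw a (betaMat B) φ hφs M hφM hφβ (E w)
  rw [phiR_eq_passH E f hf w x hx, ← hh, heq w, hform]
  have hMval : M = (1 + ∑ v' : {v : V // v ∈ T.erase w},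
      ∑ v'' ∈ Finset.univ.filter (fun v'' : {v : V // v ∈ T.erase w} => E v''.1 w),
        betaMat B v' v'' * a v''.1) /
      (1 + (∑ v ∈ T, a v) - (∑' v : V, a v) -
        ∑ v' : {v : V // v ∈ T.erase w}, ∑ v'' : {v : V // v ∈ T.erase w},
          betaMat B v' v'' * a v''.1 * (∑' u : {u : V // E v''.1 u ∧ u ∉ T}, a u.1)) := by
    rw [eq_div_iff hden.ne']
    linarith
  rw [mul_div_assoc, ← hMval]
  have : (if E w w then a w else 0) = a w * (if E w w then 1 else 0) := by simp
  rw [this]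
  ring
end

section
/- Let G₀ be the complete directed graph on a countably infinite vertex set V (E(G₀) = V × V, loops included), let f : V → (0,∞), and fix v ∈ V. Then for every x ≥ 0 such that the family (x^{f(u)})_{u ∈ V} is summable and 1 + x^{f(v)} − F_{f,V}(x) > 0, the generating function of simple v-cycles satisfies φ_{G₀,f,v}(x) = x^{f(v)} / (1 + x^{f(v)} − F_{f,V}(x)). -/
/-! A simple `v`-cycle in the complete graph is freely determined by its word of interior
vertices, an arbitrary finite word in `V \ {v}` (`cycleEquiv`), and its weight is `x ^ f v`
times the product of the weights of the letters (`rpow_fStar_ofWord`). The words of length `n`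
contribute the `n`-th power of `S = F_{f,V}(x) - x ^ f v` (`hasSum_prod_words`), so the
generating function is the geometric series `x ^ f v * ∑ S ^ n = x ^ f v / (1 - S)`; it
converges because `S < 1` is exactly the positivity of the denominator. -/

open Classical Filter Topology Finset
open scoped ENNReal

universe u

variable {V : Type u}

/-- The closed path `(w, g 0, …, g (n - 1), w)` with interior vertices `g`. -/
def ofWord {V : Type*} (w : V) (n : ℕ) (g : Fin n → V) : Fin (n + 2) → V :=
  Fin.snoc (Fin.cons w g : Fin (n + 1) → V) w

/-- Simple `w`-cycles of the complete graph correspond to finite words in `V \ {w}`;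
a word of length `n` gives a cycle with `n + 1` edges. -/
noncomputable def cycleEquiv {V : Type*} (w : V) :
    (Σ n : ℕ, Fin n → {u : V // u ≠ w}) ≃ SimpleCycle (fun _ _ : V => True) w where
  toFun p := ⟨⟨p.1, ofWord w p.1 (fun i => (p.2 i).1)⟩, by
    refine ⟨fun _ => trivial, ?_, ?_, ?_⟩
    · change ofWord w p.1 (fun i => (p.2 i).1) (Fin.castSucc 0) = w
      simp only [ofWord, Fin.snoc_castSucc, Fin.cons_zero]
    · simp only [ofWord, Fin.snoc_last]
    · intro i h0 hl
      induction i using Fin.lastCases with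
      | last => exact absurd rfl hl
      | cast i =>
        induction i using Fin.cases with
        | zero => exact absurd rfl h0
        | succ i =>
          simp only [ofWord, Fin.snoc_castSucc, Fin.cons_succ]
          exact (p.2 i).2⟩
  invFun q := ⟨q.1.1, fun i => ⟨q.1.2 i.succ.castSucc, by
    refine q.2.2.2.2 _ (fun h => ?_) (Fin.castSucc_ne_last _)
    simp [Fin.ext_iff] at h⟩⟩
  left_inv p := by
    obtain ⟨n, g⟩ := p
    simp only [ofWord, Fin.snoc_castSucc, Fin.cons_succ]
  right_inv q := by
    obtain ⟨⟨n, γ⟩, hw, h0, hl, hi⟩ := q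
    refine Subtype.ext (Sigma.ext rfl (heq_of_eq (funext fun i => ?_)))
    induction i using Fin.lastCases with
    | last => simpa only [ofWord, Fin.snoc_last] using hl.symm
    | cast i =>
      induction i using Fin.cases with
      | zero =>
        simp only [ofWord, Fin.snoc_castSucc, Fin.cons_zero]
        exact h0.symm
      | succ i => simp only [ofWord, Fin.snoc_castSucc, Fin.cons_succ]

/-- Nonnegativity of `f` makes this hold also at `x = 0`. -/
lemma rpow_fStar_ofWord {V : Type*} (f : V → ℝ) (hf : ∀ u, 0 ≤ f u) (w : V) {x : ℝ}
    (hx : 0 ≤ x) (n : ℕ) (g : Fin n → V) :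
    x ^ fStar f n (ofWord w n g) = x ^ f w * ∏ i, x ^ f (g i) := by
  rw [fStar, Real.rpow_sum_of_nonneg hx (fun i _ => hf _), Fin.prod_univ_succ]
  simp only [ofWord, Fin.snoc_castSucc, Fin.cons_zero, Fin.cons_succ]

lemma hasSum_prod_words {W : Type*} {a : W → ℝ} (ha : ∀ u, 0 ≤ a u) {S : ℝ}
    (hS : HasSum a S) (n : ℕ) :
    HasSum (fun g : Fin n → W => ∏ i, a (g i)) (S ^ n) := by
  induction n with
  | zero => simp
  | succ n ih =>
    have hnn : 0 ≤ fun g : Fin n → W => ∏ i, a (g i) :=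
      Pi.le_def.mpr fun g => Finset.prod_nonneg fun i _ => ha (g i)
    have hsm : Summable fun p : W × (Fin n → W) => a p.1 * ∏ i, a (p.2 i) :=
      Summable.mul_of_nonneg (f := a) (g := fun g : Fin n → W => ∏ i, a (g i))
        hS.summable ih.summable (Pi.le_def.mpr ha) hnn
    have hprod : HasSum (fun p : W × (Fin n → W) => a p.1 * ∏ i, a (p.2 i)) (S * S ^ n) :=
      HasSum.mul (f := a) (g := fun g : Fin n → W => ∏ i, a (g i)) hS ih hsm
    rw [pow_succ']
    let e : W × (Fin n → W) ≃ (Fin (n + 1) → W) := Fin.consEquiv fun _ => W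
    have hcomp : (fun g : Fin (n + 1) → W => ∏ i, a (g i)) ∘ e =
        fun p : W × (Fin n → W) => a p.1 * ∏ i, a (p.2 i) := by
      funext p
      simp [e, Fin.prod_univ_succ, Fin.consEquiv]
    rw [← e.hasSum_iff, hcomp]
    exact hprod

/-- For the complete graph `G₀` on a countably infinite vertex set,
`φ_{G₀,f,v}(x) = x^{f(v)} / (1 + x^{f(v)} - F_{f,V}(x))` whenever `(x^{f(u)})_u` is
summable and the denominator is positive. -/
theorem stmt13 [Countable V] [Infinite V] (f : V → ℝ) (hf : ∀ u, 0 < f u)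
    (v : V) (x : ℝ) (hx : 0 ≤ x)
    (hsum : Summable fun u : V => x ^ f u)
    (hden : 0 < 1 + x ^ f v - ∑' u : V, x ^ f u) :
    phiR (fun _ _ : V => True) f v x =
      x ^ f v / (1 + x ^ f v - ∑' u : V, x ^ f u) := by
  have ha : ∀ u : V, 0 ≤ x ^ f u := fun u => Real.rpow_nonneg hx _
  have hW : Summable fun u : {u : V // u ≠ v} => x ^ f u.1 := hsum.subtype {u | u ≠ v}
  obtain ⟨S, hS⟩ := hW
  have hS0 : 0 ≤ S := hS.nonneg fun u => ha _
  have hF : ∑' u : V, x ^ f u = x ^ f v + S := by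
    have h1 : HasSum (fun u : ({v} : Set V) => x ^ f u.1) (x ^ f v) := by
      simpa using hasSum_unique (fun u : ({v} : Set V) => x ^ f u.1)
    exact (h1.add_compl (f := fun u : V => x ^ f u) (s := {v}) hS).tsum_eq
  have hd : 1 + x ^ f v - ∑' u : V, x ^ f u = 1 - S := by rw [hF]; ring
  rw [hd] at hden ⊢
  have hgeo : HasSum (fun n : ℕ => x ^ f v * S ^ n) (x ^ f v * (1 - S)⁻¹) :=
    (hasSum_geometric_of_lt_one hS0 (by linarith)).mul_left _
  have hfib : ∀ n : ℕ, HasSum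
      (fun g : Fin n → {u : V // u ≠ v} => x ^ f v * ∏ i, x ^ f (g i).1) (x ^ f v * S ^ n) :=
    fun n => (hasSum_prod_words (a := fun u : {u : V // u ≠ v} => x ^ f u.1)
      (fun u => ha _) hS n).mul_left _
  have hsig : Summable fun p : (Σ n : ℕ, Fin n → {u : V // u ≠ v}) =>
      x ^ f v * ∏ i, x ^ f (p.2 i).1 := by
    rw [summable_sigma_of_nonneg
      fun p => mul_nonneg (ha _) (Finset.prod_nonneg fun i _ => ha _)]
    exact ⟨fun n => (hfib n).summable, by
      simpa only [fun n => (hfib n).tsum_eq] using hgeo.summable⟩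
  have htot := hgeo.sigma_of_hasSum hfib hsig
  rw [phiR, ← (cycleEquiv v).tsum_eq, div_eq_mul_inv, ← htot.tsum_eq]
  exact tsum_congr fun p => rpow_fStar_ofWord f (fun u => (hf u).le) v hx p.1 _
end
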